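/- arXiv:2012.09513 — 2 statements merged into one kernel-verified Lean document; each statement's English description precedes it below -/
import Mathlib

section
/- Let d ≥ 3 and let Z = (Z_1,…,Z_d) be a centered Gaussian vector in ℝ^d with E[Z_j²] ≥ 1 for every j. Then there is a universal constant C such that for every z ∈ ℝ^d and ε > 0, P(Z ≤ z + ε·1) − P(Z ≤ z) ≤ C ε √(log d). -/
open MeasureTheory ProbabilityTheory

/-- One-dimensional estimate for upper sets. -/
lemma gauss_upper_set {U : Set ℝ} (hU : IsUpperSet U) {y T ε : ℝ} (hT : 0 ≤ T) (hy : y ≤ T)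
    (hε : 0 < ε) (hε1 : ε ≤ 1) :
    gaussianReal 0 1 (U ∩ Set.Ioc y (y + ε))
      ≤ ENNReal.ofReal (ε * (Real.exp (3 / 2) * (T + 2))) * gaussianReal 0 1 U := by
  set h : ℝ := 1 / (T + 2) with hh
  have hT2 : 0 < T + 2 := by linarith
  have hpos : 0 < h := by positivity
  have hTh : h * (T + 2) = 1 := by rw [hh]; field_simp
  have hhle : h ≤ 1 := by nlinarith
  have key : ∀ x ∈ U ∩ Set.Ioc y (y + ε), gaussianPDF 0 1 x
      ≤ ENNReal.ofReal (Real.exp (3 / 2) * (T + 2)) * gaussianReal 0 1 U := by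
    rintro x ⟨hxU, hx1, hx2⟩
    have hsub : Set.Ioc x (x + h) ⊆ U := fun t ht => hU ht.1.le hxU
    have hlow : ENNReal.ofReal (gaussianPDFReal 0 1 x * Real.exp (-(3 / 2))) * ENNReal.ofReal h
        ≤ gaussianReal 0 1 U := by
      calc ENNReal.ofReal (gaussianPDFReal 0 1 x * Real.exp (-(3 / 2))) * ENNReal.ofReal h
          = ∫⁻ _ in Set.Ioc x (x + h),
              ENNReal.ofReal (gaussianPDFReal 0 1 x * Real.exp (-(3 / 2))) := by
            rw [setLIntegral_const, Real.volume_Ioc]; congr 2; ring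
        _ ≤ ∫⁻ t in Set.Ioc x (x + h), gaussianPDF 0 1 t := by
            apply setLIntegral_mono (measurable_gaussianPDF 0 1)
            intro t ht
            rw [gaussianPDF]
            apply ENNReal.ofReal_le_ofReal
            simp only [gaussianPDFReal]
            rw [mul_assoc, ← Real.exp_add]
            apply mul_le_mul_of_nonneg_left _ (by positivity)
            apply Real.exp_le_exp.mpr
            simp only [NNReal.coe_one]
            have h1 : 0 < t - x := by linarith [ht.1]
            have h2 : t - x ≤ h := by linarith [ht.2]
            have h3 : x ≤ T + 1 := by linarith
            have h4 : (t - x) * x ≤ 1 := by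
              have : (t - x) * x ≤ (t - x) * (T + 2) :=
                mul_le_mul_of_nonneg_left (by linarith) h1.le
              nlinarith
            have h5 : (t - x) * (t - x) ≤ 1 := by nlinarith
            nlinarith
        _ ≤ ∫⁻ t in U, gaussianPDF 0 1 t := lintegral_mono_set hsub
        _ = gaussianReal 0 1 U := (gaussianReal_apply 0 one_ne_zero U).symm
    calc gaussianPDF 0 1 x
        = ENNReal.ofReal (Real.exp (3 / 2) * (T + 2)) *
          (ENNReal.ofReal (gaussianPDFReal 0 1 x * Real.exp (-(3 / 2))) * ENNReal.ofReal h) := by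
          have hn := gaussianPDFReal_nonneg 0 1 x
          rw [← ENNReal.ofReal_mul (by positivity), ← ENNReal.ofReal_mul (by positivity),
            gaussianPDF]
          congr 1
          have : Real.exp (3 / 2) * Real.exp (-(3 / 2)) = 1 := by
            rw [← Real.exp_add]; simp
          calc gaussianPDFReal 0 1 x = gaussianPDFReal 0 1 x *
                (Real.exp (3 / 2) * Real.exp (-(3 / 2))) * (h * (T + 2)) := by
                rw [this, hTh]; ring
            _ = _ := by ring
      _ ≤ _ := by gcongr
  calc gaussianReal 0 1 (U ∩ Set.Ioc y (y + ε))
      = ∫⁻ x in U ∩ Set.Ioc y (y + ε), gaussianPDF 0 1 x := gaussianReal_apply 0 one_ne_zero _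
    _ ≤ ∫⁻ _ in U ∩ Set.Ioc y (y + ε),
          ENNReal.ofReal (Real.exp (3 / 2) * (T + 2)) * gaussianReal 0 1 U :=
        setLIntegral_mono measurable_const key
    _ = ENNReal.ofReal (Real.exp (3 / 2) * (T + 2)) * gaussianReal 0 1 U *
          volume (U ∩ Set.Ioc y (y + ε)) := setLIntegral_const _ _
    _ ≤ ENNReal.ofReal (Real.exp (3 / 2) * (T + 2)) * gaussianReal 0 1 U * ENNReal.ofReal ε := by
        gcongr
        refine (measure_mono Set.inter_subset_right).trans ?_
        rw [Real.volume_Ioc]; apply ENNReal.ofReal_le_ofReal; linarith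
    _ = _ := by
        rw [ENNReal.ofReal_mul hε.le]; ring

/-- One-dimensional estimate far in the right tail. -/
lemma gauss_tail {y T ε : ℝ} (hT : 0 ≤ T) (hy : T < y) (hε : 0 < ε) :
    gaussianReal 0 1 (Set.Ioc y (y + ε)) ≤ ENNReal.ofReal (ε * Real.exp (-T ^ 2 / 2)) := by
  rw [gaussianReal_apply 0 one_ne_zero]
  calc ∫⁻ x in Set.Ioc y (y + ε), gaussianPDF 0 1 x
      ≤ ∫⁻ _ in Set.Ioc y (y + ε), ENNReal.ofReal (Real.exp (-T ^ 2 / 2)) := by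
        apply setLIntegral_mono measurable_const
        intro x hx
        rw [gaussianPDF]
        apply ENNReal.ofReal_le_ofReal
        simp only [gaussianPDFReal, NNReal.coe_one, mul_one, sub_zero]
        have h1 : (√(2 * Real.pi))⁻¹ ≤ 1 := by
          apply inv_le_one_of_one_le₀
          rw [Real.one_le_sqrt]
          linarith [Real.pi_gt_three]
        have h2 : Real.exp (-x ^ 2 / 2) ≤ Real.exp (-T ^ 2 / 2) := by
          apply Real.exp_le_exp.mpr
          have : T < x := hy.trans hx.1
          nlinarith
        calc _ ≤ 1 * Real.exp (-x ^ 2 / 2) := by gcongr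
          _ ≤ _ := by rw [one_mul]; exact h2
    _ = _ := by
        rw [setLIntegral_const, Real.volume_Ioc, ← ENNReal.ofReal_mul (by positivity)]
        congr 1; ring

/-- The event that `j` is the first maximiser of `v - y`. -/
def firstArgmax {d : ℕ} (y : Fin d → ℝ) (j : Fin d) : Set (Fin d → ℝ) :=
  {v | (∀ k, k < j → v k - y k < v j - y j) ∧ ∀ k, v k - y k ≤ v j - y j}

lemma measurableSet_firstArgmax {d : ℕ} (y : Fin d → ℝ) (j : Fin d) :
    MeasurableSet (firstArgmax y j) := by
  have : firstArgmax y j = (⋂ k, ⋂ (_ : k < j), {v | v k - y k < v j - y j}) ∩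
      ⋂ k, {v | v k - y k ≤ v j - y j} := by
    ext v; simp [firstArgmax]
  rw [this]
  refine MeasurableSet.inter (MeasurableSet.iInter fun k => MeasurableSet.iInter fun _ => ?_)
    (MeasurableSet.iInter fun k => ?_)
  · exact measurableSet_lt (by fun_prop) (by fun_prop)
  · exact measurableSet_le (by fun_prop) (by fun_prop)

lemma disjoint_firstArgmax {d : ℕ} (y : Fin d → ℝ) :
    Pairwise (Function.onFun Disjoint (firstArgmax y)) := by
  intro i j hij
  rw [Function.onFun, Set.disjoint_left]
  intro v hi hj
  rcases lt_or_gt_of_ne hij with h | h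
  · exact absurd (hj.1 i h) (not_lt.mpr (hi.2 j))
  · exact absurd (hi.1 j h) (not_lt.mpr (hj.2 i))

lemma exists_firstArgmax {d : ℕ} (hd : 3 ≤ d) (y v : Fin d → ℝ) :
    ∃ j, v ∈ firstArgmax y j := by
  haveI : NeZero d := ⟨by omega⟩
  obtain ⟨i, hi⟩ := Finite.exists_max (fun k => v k - y k)
  obtain ⟨j, hj, hmin⟩ := Set.exists_min_image {j : Fin d | ∀ k, v k - y k ≤ v j - y j} id
    (Set.toFinite _) ⟨i, hi⟩
  refine ⟨j, fun k hk => ?_, hj⟩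
  by_contra hcon
  have : j ≤ k := hmin k (fun l => (hj l).trans (not_lt.mp hcon))
  exact absurd hk (not_lt.mpr this)

/-- The key estimate on one cell. -/
lemma cell_bound {d : ℕ} {Ω : Type} [MeasurableSpace Ω] {μ : Measure Ω} [IsProbabilityMeasure μ]
    {Y : Ω → Fin d → ℝ} (hYm : Measurable Y) (hG : HasGaussianLaw Y μ)
    (hmap : ∀ j, μ.map (fun ω => Y ω j) = gaussianReal 0 1) (y : Fin d → ℝ) (j : Fin d)
    {T ε : ℝ} (hT : 0 ≤ T) (hy : y j ≤ T) (hε : 0 < ε) (hε1 : ε ≤ 1) :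
    μ (Y ⁻¹' firstArgmax y j ∩ {ω | Y ω j ∈ Set.Ioc (y j) (y j + ε)})
      ≤ ENNReal.ofReal (ε * (Real.exp (3 / 2) * (T + 2))) * μ (Y ⁻¹' firstArgmax y j) := by
  have hYj : ∀ k, Measurable (fun ω => Y ω k) := fun k => (measurable_pi_apply k).comp hYm
  have hL2 : ∀ k, MemLp (fun ω => Y ω k) 2 μ := fun k =>
    (hG.map_fun (ContinuousLinearMap.proj k)).memLp_two
  have hvar : ∀ k, Var[fun ω => Y ω k; μ] = 1 := by
    intro k
    have h := variance_id_gaussianReal (μ := 0) (v := 1)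
    rw [← hmap k, variance_map (by fun_prop) (hYj k).aemeasurable] at h
    simpa [Function.comp_def] using h
  set ρ : Fin d → ℝ := fun k => cov[fun ω => Y ω j, fun ω => Y ω k; μ] with hρ
  have hρ1 : ∀ k, ρ k ≤ 1 := by
    intro k
    have h := variance_nonneg (fun ω => Y ω j - Y ω k) μ
    rw [variance_fun_sub (hL2 j) (hL2 k), hvar, hvar] at h
    simp only [hρ]; linarith
  let L : (Fin d → ℝ) →L[ℝ] (Unit → ℝ) × (Fin d → ℝ) :=
    (ContinuousLinearMap.pi fun _ => ContinuousLinearMap.proj j).prod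
      (ContinuousLinearMap.pi fun k =>
        ContinuousLinearMap.proj k - ρ k • ContinuousLinearMap.proj j)
  have hind0 := HasGaussianLaw.indepFun_of_covariance_eval (P := μ)
    (X := fun (_ : Unit) ω => Y ω j) (Y := fun (k : Fin d) ω => Y ω k - ρ k * Y ω j)
    (hG.map_fun L) (by
      intro _ k
      rw [covariance_fun_sub_right (hL2 j) (hL2 k) ((hL2 j).const_mul _),
        covariance_const_mul_right, covariance_self (hYj j).aemeasurable, hvar]
      simp [hρ])
  set W : Ω → Fin d → ℝ := fun ω k => Y ω k - ρ k * Y ω j with hW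
  have hWm : Measurable W := by
    rw [measurable_pi_iff]; intro k; exact (hYj k).sub ((hYj j).const_mul _)
  have hind : IndepFun (fun ω => Y ω j) W μ :=
    hind0.comp (φ := fun f : Unit → ℝ => f ()) (ψ := id) (by fun_prop) measurable_id
  have hjoint : μ.map (fun ω => (Y ω j, W ω)) = (gaussianReal 0 1).prod (μ.map W) := by
    rw [(indepFun_iff_map_prod_eq_prod_map_map (hYj j).aemeasurable hWm.aemeasurable).mp hind,
      hmap]
  haveI : IsProbabilityMeasure (μ.map W) := Measure.isProbabilityMeasure_map hWm.aemeasurable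
  let S : Set (ℝ × (Fin d → ℝ)) :=
    (fun p : ℝ × (Fin d → ℝ) => fun k => p.2 k + ρ k * p.1) ⁻¹' firstArgmax y j
  have hSm : MeasurableSet S := by
    apply measurableSet_firstArgmax y j |>.preimage
    fun_prop
  have hIm : MeasurableSet (S ∩ Prod.fst ⁻¹' Set.Ioc (y j) (y j + ε)) :=
    hSm.inter (measurableSet_Ioc.preimage measurable_fst)
  have hpm : Measurable (fun ω => (Y ω j, W ω)) := (hYj j).prodMk hWm
  have hρj : ρ j = 1 := by
    simp only [hρ]; rw [covariance_self (hYj j).aemeasurable, hvar]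
  have e1 : Y ⁻¹' firstArgmax y j = (fun ω => (Y ω j, W ω)) ⁻¹' S := by
    ext ω; simp [S, hW]
  have e2 : Y ⁻¹' firstArgmax y j ∩ {ω | Y ω j ∈ Set.Ioc (y j) (y j + ε)}
      = (fun ω => (Y ω j, W ω)) ⁻¹' (S ∩ Prod.fst ⁻¹' Set.Ioc (y j) (y j + ε)) := by
    rw [e1]; rfl
  rw [e2, e1, ← Measure.map_apply hpm hIm, ← Measure.map_apply hpm hSm, hjoint,
    Measure.prod_apply_symm hIm, Measure.prod_apply_symm hSm,
    ← lintegral_const_mul' _ _ ENNReal.ofReal_ne_top]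
  apply lintegral_mono
  intro w
  have hup : IsUpperSet ((fun x => (x, w)) ⁻¹' S) := by
    intro a b hab ha
    simp only [S, Set.mem_preimage, firstArgmax, Set.mem_setOf_eq, hρj, one_mul] at ha ⊢
    have hk : ∀ k, ρ k * (b - a) ≤ b - a := fun k => by
      have := mul_le_mul_of_nonneg_right (hρ1 k) (sub_nonneg.mpr hab)
      linarith
    refine ⟨fun k hkj => ?_, fun k => ?_⟩
    · have := ha.1 k hkj; have := hk k; nlinarith
    · have := ha.2 k; have := hk k; nlinarith
  exact gauss_upper_set hup hT hy hε hε1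

lemma unit_bound {d : ℕ} (hd : 3 ≤ d) {Ω : Type} [MeasurableSpace Ω] {μ : Measure Ω}
    [IsProbabilityMeasure μ]
    {Y : Ω → Fin d → ℝ} (hYm : Measurable Y) (hG : HasGaussianLaw Y μ)
    (hmap : ∀ j, μ.map (fun ω => Y ω j) = gaussianReal 0 1) (y : Fin d → ℝ)
    {T ε : ℝ} (hT : 0 ≤ T) (hTd : d * Real.exp (-T ^ 2 / 2) ≤ 1) (hε : 0 < ε) (hε1 : ε ≤ 1) :
    μ {ω | (∀ j, Y ω j ≤ y j + ε) ∧ ¬ ∀ j, Y ω j ≤ y j}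
      ≤ ENNReal.ofReal (ε * (Real.exp (3 / 2) * (T + 2)) + ε) := by
  have hYj : ∀ k, Measurable (fun ω => Y ω k) := fun k => (measurable_pi_apply k).comp hYm
  have hBm : ∀ j, MeasurableSet (Y ⁻¹' firstArgmax y j) := fun j =>
    (measurableSet_firstArgmax y j).preimage hYm
  set K : ℝ := ε * (Real.exp (3 / 2) * (T + 2)) with hK
  have hK0 : 0 ≤ K := by positivity
  have hsub : {ω | (∀ j, Y ω j ≤ y j + ε) ∧ ¬ ∀ j, Y ω j ≤ y j} ⊆
      ⋃ j, (Y ⁻¹' firstArgmax y j ∩ {ω | Y ω j ∈ Set.Ioc (y j) (y j + ε)}) := by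
    rintro ω ⟨h1, h2⟩
    obtain ⟨j, hj⟩ := exists_firstArgmax hd y (Y ω)
    push Not at h2
    obtain ⟨i, hi⟩ := h2
    refine Set.mem_iUnion.mpr ⟨j, hj, ?_, h1 j⟩
    have := hj.2 i
    linarith
  have hterm : ∀ j, μ (Y ⁻¹' firstArgmax y j ∩ {ω | Y ω j ∈ Set.Ioc (y j) (y j + ε)})
      ≤ ENNReal.ofReal K * μ (Y ⁻¹' firstArgmax y j)
        + ENNReal.ofReal (ε * Real.exp (-T ^ 2 / 2)) := by
    intro j
    rcases le_or_gt (y j) T with h | h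
    · exact (cell_bound hYm hG hmap y j hT h hε hε1).trans le_self_add
    · refine ((measure_mono Set.inter_subset_right).trans ?_).trans le_add_self
      have := gauss_tail hT h hε
      rwa [← hmap j, Measure.map_apply (hYj j) measurableSet_Ioc] at this
  calc _ ≤ ∑ j, μ (Y ⁻¹' firstArgmax y j ∩ {ω | Y ω j ∈ Set.Ioc (y j) (y j + ε)}) :=
        (measure_mono hsub).trans (measure_iUnion_fintype_le _ _)
    _ ≤ ∑ j, (ENNReal.ofReal K * μ (Y ⁻¹' firstArgmax y j)
        + ENNReal.ofReal (ε * Real.exp (-T ^ 2 / 2))) := Finset.sum_le_sum fun j _ => hterm j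
    _ = ENNReal.ofReal K * ∑ j, μ (Y ⁻¹' firstArgmax y j)
        + d * ENNReal.ofReal (ε * Real.exp (-T ^ 2 / 2)) := by
        rw [Finset.sum_add_distrib, Finset.mul_sum]; simp
    _ ≤ ENNReal.ofReal K * 1 + ENNReal.ofReal ε := by
        gcongr
        · have := measure_iUnion (μ := μ) (f := fun j => Y ⁻¹' firstArgmax y j)
            (fun i j hij => (disjoint_firstArgmax y hij).preimage Y) hBm
          rw [tsum_fintype] at this
          rw [← this]; exact prob_le_one
        · rw [← ENNReal.ofReal_natCast, ← ENNReal.ofReal_mul (by positivity)]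
          apply ENNReal.ofReal_le_ofReal
          nlinarith
    _ = _ := by rw [mul_one, ENNReal.ofReal_add hK0 hε.le]

/-- Nazarov's inequality.  There is a universal constant C such that for
every d ≥ 3 and every centered Gaussian vector Z in ℝ^d with E[Z_j²] ≥ 1 for all j,
for all z and ε > 0, P(Z ≤ z + ε·1) − P(Z ≤ z) ≤ C ε √(log d). -/
theorem stmt10 :
    ∃ C : ℝ, 0 < C ∧
      ∀ (d : ℕ), 3 ≤ d →
      ∀ (Ω : Type) (_ : MeasurableSpace Ω) (μ : Measure Ω), IsProbabilityMeasure μ →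
      ∀ (Z : Ω → Fin d → ℝ), Measurable Z →
      (∀ l : (Fin d → ℝ) →ₗ[ℝ] ℝ, ∃ v : NNReal,
        μ.map (fun ω => l (Z ω)) = gaussianReal 0 v) →
      (∀ j, 1 ≤ ∫ ω, (Z ω j) ^ 2 ∂μ) →
      ∀ (z : Fin d → ℝ) (ε : ℝ), 0 < ε →
        (μ {ω | ∀ j, Z ω j ≤ z j + ε}).toReal - (μ {ω | ∀ j, Z ω j ≤ z j}).toReal
          ≤ C * ε * Real.sqrt (Real.log d) := by
  refine ⟨4 * Real.exp (3 / 2) + 1, by positivity, ?_⟩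
  intro d hd Ω _ μ hμ Z hZm hgauss hvar z ε hε
  have hd3 : (3 : ℝ) ≤ d := by exact_mod_cast hd
  have hdpos : (0 : ℝ) < d := by linarith
  have hlog : 1 ≤ Real.log d := by
    rw [Real.le_log_iff_exp_le hdpos]
    linarith [Real.exp_one_lt_d9]
  set s := Real.sqrt (Real.log d) with hs
  have hs1 : 1 ≤ s := Real.one_le_sqrt.mpr hlog
  have hss : s ^ 2 = Real.log d := Real.sq_sqrt (by linarith)
  have hexp : 0 < Real.exp (3 / 2) := Real.exp_pos _
  rcases le_or_gt ε 1 with hε1 | hε1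
  swap
  · have h1 : (μ {ω | ∀ j, Z ω j ≤ z j + ε}).toReal ≤ 1 := measureReal_le_one
    have h2 : 0 ≤ (μ {ω | ∀ j, Z ω j ≤ z j}).toReal := ENNReal.toReal_nonneg
    have h3 : 1 ≤ ε * s := by nlinarith
    have h4 : 0 ≤ Real.exp (3 / 2) * (ε * s) := by positivity
    nlinarith
  have hZj : ∀ k, Measurable (fun ω => Z ω k) := fun k => (measurable_pi_apply k).comp hZm
  have hGZ : HasGaussianLaw Z μ := ⟨by
    apply isGaussian_of_map_eq_gaussianReal
    intro L
    obtain ⟨v, hv⟩ := hgauss L.toLinearMap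
    refine ⟨0, v, ?_⟩
    rw [Measure.map_map (by fun_prop) hZm]
    exact hv⟩
  have hcoord : ∀ j, ∃ v : NNReal, 1 ≤ v ∧ μ.map (fun ω => Z ω j) = gaussianReal 0 v := by
    intro j
    obtain ⟨v, hv⟩ := hgauss (LinearMap.proj j)
    simp only [LinearMap.proj_apply] at hv
    refine ⟨v, ?_, hv⟩
    have h1 : Var[fun ω => Z ω j; μ] = v := by
      have h := variance_id_gaussianReal (μ := 0) (v := v)
      rw [← hv, variance_map (by fun_prop) (hZj j).aemeasurable] at h
      simpa [Function.comp_def] using h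
    have h2 : ∫ ω, Z ω j ∂μ = 0 := by
      have h := integral_id_gaussianReal (μ := 0) (v := v)
      rw [← hv, integral_map (hZj j).aemeasurable (by fun_prop)] at h
      exact h
    have h3 := variance_of_integral_eq_zero (hZj j).aemeasurable h2
    have h4 := hvar j
    rw [← h3, h1] at h4
    exact_mod_cast h4
  choose v hv1 hv using hcoord
  set σ : Fin d → ℝ := fun j => Real.sqrt (v j) with hσ
  have hσ1 : ∀ j, 1 ≤ σ j := fun j => Real.one_le_sqrt.mpr (by exact_mod_cast hv1 j)
  have hσ0 : ∀ j, 0 < σ j := fun j => by linarith [hσ1 j]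
  have hσsq : ∀ j, σ j ^ 2 = v j := fun j => Real.sq_sqrt (by positivity)
  set Y : Ω → Fin d → ℝ := fun ω j => (σ j)⁻¹ * Z ω j with hY
  have hYm : Measurable Y := by
    rw [measurable_pi_iff]; intro k; exact (hZj k).const_mul _
  let L : (Fin d → ℝ) →L[ℝ] (Fin d → ℝ) :=
    ContinuousLinearMap.pi fun k => (σ k)⁻¹ • ContinuousLinearMap.proj k
  have hGY : HasGaussianLaw Y μ := hGZ.map_fun L
  have hmap : ∀ j, μ.map (fun ω => Y ω j) = gaussianReal 0 1 := by
    intro j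
    have h := gaussianReal_map_const_mul (μ := 0) (v := v j) (σ j)⁻¹
    rw [← hv j, Measure.map_map (by fun_prop) (hZj j)] at h
    simp only [Function.comp_def] at h
    rw [show (fun ω => Y ω j) = fun ω => (σ j)⁻¹ * Z ω j from rfl, h]
    congr 1
    · simp
    · apply NNReal.eq
      have := hσsq j
      have h0 := (hσ0 j).ne'
      simp only [NNReal.coe_mul, NNReal.coe_mk, NNReal.coe_one]
      rw [← this]; field_simp
  set T : ℝ := 2 * s with hTdef
  have hT : 0 ≤ T := by linarith
  have hTd : d * Real.exp (-T ^ 2 / 2) ≤ 1 := by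
    have : Real.exp (-T ^ 2 / 2) ≤ Real.exp (-Real.log d) := by
      apply Real.exp_le_exp.mpr; rw [← hss, hTdef]; nlinarith
    rw [Real.exp_neg, Real.exp_log hdpos] at this
    calc d * Real.exp (-T ^ 2 / 2) ≤ d * (d : ℝ)⁻¹ := by gcongr
      _ = 1 := by field_simp
  have hmain := unit_bound hd hYm hGY hmap (fun j => (σ j)⁻¹ * z j) hT hTd hε hε1
  have hAm : ∀ c : ℝ, MeasurableSet {ω | ∀ j, Z ω j ≤ z j + c} := by
    intro c
    rw [Set.setOf_forall]
    exact MeasurableSet.iInter fun j => measurableSet_le (hZj j) measurable_const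
  have hBm : MeasurableSet {ω | ∀ j, Z ω j ≤ z j} := by simpa using hAm 0
  have hBA : {ω | ∀ j, Z ω j ≤ z j} ⊆ {ω | ∀ j, Z ω j ≤ z j + ε} :=
    fun ω h j => (h j).trans (by linarith)
  have hdiff : (μ {ω | ∀ j, Z ω j ≤ z j + ε}).toReal - (μ {ω | ∀ j, Z ω j ≤ z j}).toReal
      = (μ ({ω | ∀ j, Z ω j ≤ z j + ε} \ {ω | ∀ j, Z ω j ≤ z j})).toReal :=
    (measureReal_diff hBA hBm).symm
  rw [hdiff]
  have hsub : {ω | ∀ j, Z ω j ≤ z j + ε} \ {ω | ∀ j, Z ω j ≤ z j} ⊆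
      {ω | (∀ j, Y ω j ≤ (σ j)⁻¹ * z j + ε) ∧ ¬ ∀ j, Y ω j ≤ (σ j)⁻¹ * z j} := by
    rintro ω ⟨h1, h2⟩
    refine ⟨fun j => ?_, fun h => h2 fun j => ?_⟩
    · have h3 : (σ j)⁻¹ * Z ω j ≤ (σ j)⁻¹ * (z j + ε) :=
        mul_le_mul_of_nonneg_left (h1 j) (inv_nonneg.mpr (hσ0 j).le)
      have h4 : (σ j)⁻¹ * ε ≤ 1 * ε :=
        mul_le_mul_of_nonneg_right (inv_le_one_of_one_le₀ (hσ1 j)) hε.le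
      simp only [hY]; linarith
    · exact le_of_mul_le_mul_left (h j) (inv_pos.mpr (hσ0 j))
  have hfin := ENNReal.toReal_le_of_le_ofReal (by positivity) ((measure_mono hsub).trans hmain)
  refine hfin.trans ?_
  have h5 : ε * (Real.exp (3 / 2) * (T + 2)) ≤ ε * (Real.exp (3 / 2) * (4 * s)) := by
    gcongr; linarith
  have h6 : ε ≤ ε * s := by nlinarith
  calc _ ≤ ε * (Real.exp (3 / 2) * (4 * s)) + ε * s := add_le_add h5 h6
    _ = _ := by ring
end

section
/- Let Z ∼ N(0, Σ) and Z' ∼ N(0, Σ') be centered Gaussian vectors in ℝ^d (d ≥ 3), where Σ has unit diagonal entries and smallest eigenvalue σ_*² > 0. Set D := ‖Σ − Σ'‖_∞ (entrywise max norm). Then sup over all rectangles A = ∏_j (a_j, b_j] of |P(Z ∈ A) − P(Z' ∈ A)| is at most C (D/σ_*²) (log d) (1 ∨ |log(D/σ_*²)|) for a universal constant C. -/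
open MeasureTheory ProbabilityTheory


namespace GC

lemma pdf01 (x : ℝ) : gaussianPDFReal 0 1 x = (√(2 * Real.pi))⁻¹ * Real.exp (-x ^ 2 / 2) := by
  simp [gaussianPDFReal]

lemma pdf_lower (x y : ℝ) (h : |y - x| ≤ 1 / (1 + |x|)) :
    Real.exp (-(3 / 2)) * gaussianPDFReal 0 1 x ≤ gaussianPDFReal 0 1 y := by
  rw [pdf01, pdf01, mul_left_comm, ← Real.exp_add]
  gcongr
  have h1 : 0 < 1 + |x| := by positivity
  have h2 : |y - x| * (1 + |x|) ≤ 1 := by rwa [le_div_iff₀ h1] at h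
  have h3 : |y - x| ≤ 1 := by nlinarith [abs_nonneg (y - x), abs_nonneg x]
  have h4 : y ^ 2 = x ^ 2 + 2 * (x * (y - x)) + |y - x| ^ 2 := by rw [sq_abs]; ring
  have h5 : x * (y - x) ≤ |x| * |y - x| := by rw [← abs_mul]; exact le_abs_self _
  nlinarith [abs_nonneg (y - x), abs_nonneg x]

lemma real_gauss (s : Set ℝ) :
    (gaussianReal 0 1).real s = ∫ x in s, gaussianPDFReal 0 1 x := by
  rw [Measure.real, gaussianReal_apply_eq_integral _ one_ne_zero, ENNReal.toReal_ofReal]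
  exact integral_nonneg fun x => gaussianPDFReal_nonneg _ _ _

lemma mills_gen (x : ℝ) (s : Set ℝ) (hs : MeasurableSet s) (u : ℝ)
    (hsub : Set.Ioc u (u + 1 / (1 + |x|)) ⊆ s)
    (hd : ∀ y ∈ Set.Ioc u (u + 1 / (1 + |x|)), |y - x| ≤ 1 / (1 + |x|)) :
    gaussianPDFReal 0 1 x ≤ Real.exp (3 / 2) * (1 + |x|) * (gaussianReal 0 1).real s := by
  have h1 : 0 < 1 + |x| := by positivity
  have hh : 0 < 1 / (1 + |x|) := by positivity
  have key : (1 / (1 + |x|)) * (Real.exp (-(3 / 2)) * gaussianPDFReal 0 1 x)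
      ≤ (gaussianReal 0 1).real s := by
    calc (1 / (1 + |x|)) * (Real.exp (-(3 / 2)) * gaussianPDFReal 0 1 x)
        = ∫ y in Set.Ioc u (u + 1 / (1 + |x|)), (Real.exp (-(3 / 2)) * gaussianPDFReal 0 1 x) := by
          rw [setIntegral_const, smul_eq_mul, Measure.real, Real.volume_Ioc,
            ENNReal.toReal_ofReal (by linarith)]
          ring
      _ ≤ ∫ y in Set.Ioc u (u + 1 / (1 + |x|)), gaussianPDFReal 0 1 y := by
          apply setIntegral_mono_on
          · exact integrableOn_const (by simp)
          · exact (integrable_gaussianPDFReal 0 1).integrableOn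
          · exact measurableSet_Ioc
          · intro y hy
            exact pdf_lower x y (hd y hy)
      _ = (gaussianReal 0 1).real (Set.Ioc u (u + 1 / (1 + |x|))) := (real_gauss _).symm
      _ ≤ _ := measureReal_mono hsub
  have e : Real.exp (3/2) * Real.exp (-(3/2)) = 1 := by rw [← Real.exp_add]; simp
  calc gaussianPDFReal 0 1 x
      = Real.exp (3 / 2) * (1 + |x|) *
        ((1 / (1 + |x|)) * (Real.exp (-(3 / 2)) * gaussianPDFReal 0 1 x)) := by
        field_simp
        rw [mul_assoc, e, mul_one]
    _ ≤ _ := by gcongr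

lemma mills_Ioi (x : ℝ) :
    gaussianPDFReal 0 1 x ≤ Real.exp (3 / 2) * (1 + |x|) * (gaussianReal 0 1).real (Set.Ioi x) := by
  apply mills_gen x _ measurableSet_Ioi x
  · exact Set.Ioc_subset_Ioi_self
  · intro y hy
    rw [abs_of_nonneg (by linarith [hy.1])]; linarith [hy.2]

lemma mills_Iic (x : ℝ) :
    gaussianPDFReal 0 1 x ≤ Real.exp (3 / 2) * (1 + |x|) * (gaussianReal 0 1).real (Set.Iic x) := by
  apply mills_gen x _ measurableSet_Iic (x - 1 / (1 + |x|))
  · intro y hy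
    simpa using hy.2
  · intro y hy
    have := hy.1; have := hy.2
    rw [abs_le]; constructor <;> linarith

/-- The logarithmic factor. -/
noncomputable def LL (d : ℕ) : ℝ := 15 * √(Real.log d)

lemma log_ge_one {d : ℕ} (hd : 3 ≤ d) : 1 ≤ Real.log d := by
  rw [Real.le_log_iff_exp_le (by positivity)]
  have : (3 : ℝ) ≤ d := by exact_mod_cast hd
  linarith [Real.exp_one_lt_d9]

lemma sqrt_log_ge_one {d : ℕ} (hd : 3 ≤ d) : 1 ≤ √(Real.log d) := by
  rw [Real.one_le_sqrt]; exact log_ge_one hd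

lemma LL_sq {d : ℕ} (hd : 3 ≤ d) : LL d ^ 2 = 225 * Real.log d := by
  rw [LL, mul_pow, Real.sq_sqrt (by linarith [log_ge_one hd])]; norm_num

lemma exp32 : Real.exp (3/2) ≤ 5 := by
  have h : Real.exp (3/2) ^ 2 = Real.exp 1 ^ 3 := by
    rw [← Real.exp_nat_mul, ← Real.exp_nat_mul]; norm_num
  have h2 : Real.exp 1 ^ 3 ≤ 2.72 ^ 3 := by
    gcongr; linarith [Real.exp_one_lt_d9]
  nlinarith [Real.exp_pos (3/2)]

lemma pdf_le (x : ℝ) : gaussianPDFReal 0 1 x ≤ Real.exp (-x ^ 2 / 2) := by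
  rw [pdf01]
  have : (√(2 * Real.pi))⁻¹ ≤ 1 := by
    apply inv_le_one_of_one_le₀
    rw [Real.one_le_sqrt]; nlinarith [Real.pi_gt_three]
  nlinarith [Real.exp_pos (-x ^ 2 / 2)]

lemma mills_L {d : ℕ} (hd : 3 ≤ d) (x m : ℝ) (hm : 0 ≤ m)
    (h : gaussianPDFReal 0 1 x ≤ Real.exp (3 / 2) * (1 + |x|) * m) :
    gaussianPDFReal 0 1 x ≤ LL d * m + 1 / d ∧
    |x| * gaussianPDFReal 0 1 x ≤ LL d ^ 2 * m + 1 / d := by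
  have hs := sqrt_log_ge_one hd
  have hl := log_ge_one hd
  have hdpos : (0:ℝ) < d := by positivity
  have hx := abs_nonneg x
  by_cases hx2 : |x| ≤ 2 * √(Real.log d)
  · have h1 : gaussianPDFReal 0 1 x ≤ LL d * m := by
      refine h.trans ?_
      gcongr
      rw [LL]
      nlinarith [exp32, Real.exp_pos (3/2)]
    have h2 : |x| * gaussianPDFReal 0 1 x ≤ LL d ^ 2 * m := by
      have h3 : |x| ≤ LL d := by rw [LL]; linarith
      calc |x| * gaussianPDFReal 0 1 x ≤ LL d * (LL d * m) := by
            gcongr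
            · exact gaussianPDFReal_nonneg _ _ _
            · exact hx.trans h3
        _ = _ := by ring
    have : (0:ℝ) ≤ 1 / d := by positivity
    constructor <;> linarith
  · push Not at hx2
    have h4 : 4 * Real.log d ≤ x ^ 2 := by
      rw [← sq_abs x]
      have := Real.sq_sqrt (show 0 ≤ Real.log d by linarith)
      nlinarith
    have hinv : Real.exp (-Real.log d) = 1 / d := by
      rw [Real.exp_neg, Real.exp_log hdpos, one_div]
    have hL : 0 ≤ LL d := by rw [LL]; positivity
    have h5 : |x| ≤ Real.exp (x ^ 2 / 4) := by
      have := Real.add_one_le_exp (x ^ 2 / 4)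
      rw [← sq_abs x] at this ⊢
      nlinarith [sq_nonneg (|x| - 2)]
    have h6 : |x| * gaussianPDFReal 0 1 x ≤ 1 / d := by
      calc |x| * gaussianPDFReal 0 1 x ≤ Real.exp (x ^ 2 / 4) * Real.exp (-x ^ 2 / 2) := by
            gcongr
            · exact gaussianPDFReal_nonneg _ _ _
            · exact pdf_le x
        _ = Real.exp (-(x ^ 2 / 4)) := by rw [← Real.exp_add]; congr 1; ring
        _ ≤ Real.exp (-Real.log d) := by gcongr; linarith
        _ = _ := hinv
    have h7 : gaussianPDFReal 0 1 x ≤ 1 / d := by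
      calc gaussianPDFReal 0 1 x ≤ Real.exp (-x ^ 2 / 2) := pdf_le x
        _ ≤ Real.exp (-Real.log d) := by gcongr; linarith
        _ = _ := hinv
    have : 0 ≤ LL d * m := by positivity
    have : 0 ≤ LL d ^ 2 * m := by positivity
    constructor <;> linarith

/-- one-dimensional rectangle probability -/
noncomputable def pp (a b : ℝ) : ℝ := (gaussianReal 0 1).real (Set.Ioc a b)

lemma pp_nonneg (a b : ℝ) : 0 ≤ pp a b := measureReal_nonneg

lemma pp_le_one (a b : ℝ) : pp a b ≤ 1 := measureReal_le_one

lemma compl_b (a b : ℝ) : (gaussianReal 0 1).real (Set.Ioi b) ≤ 1 - pp a b := by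
  have h : pp a b ≤ (gaussianReal 0 1).real (Set.Iic b) :=
    measureReal_mono Set.Ioc_subset_Iic_self
  have h2 := probReal_compl_eq_one_sub (μ := gaussianReal 0 1) (measurableSet_Iic (a := b))
  rw [Set.compl_Iic] at h2
  linarith

lemma compl_a (a b : ℝ) : (gaussianReal 0 1).real (Set.Iic a) ≤ 1 - pp a b := by
  have h : pp a b ≤ (gaussianReal 0 1).real (Set.Ioi a) :=
    measureReal_mono Set.Ioc_subset_Ioi_self
  have h2 := probReal_compl_eq_one_sub (μ := gaussianReal 0 1) (measurableSet_Ioi (a := a))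
  rw [Set.compl_Ioi] at h2
  linarith

lemma mills_a {d : ℕ} (hd : 3 ≤ d) (a b : ℝ) :
    gaussianPDFReal 0 1 a ≤ LL d * (1 - pp a b) + 1 / d ∧
    |a| * gaussianPDFReal 0 1 a ≤ LL d ^ 2 * (1 - pp a b) + 1 / d := by
  apply mills_L hd _ _ (by linarith [pp_le_one a b])
  refine (mills_Iic a).trans ?_
  gcongr
  exact compl_a a b

lemma mills_b {d : ℕ} (hd : 3 ≤ d) (a b : ℝ) :
    gaussianPDFReal 0 1 b ≤ LL d * (1 - pp a b) + 1 / d ∧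
    |b| * gaussianPDFReal 0 1 b ≤ LL d ^ 2 * (1 - pp a b) + 1 / d := by
  apply mills_L hd _ _ (by linarith [pp_le_one a b])
  refine (mills_Ioi b).trans ?_
  gcongr
  exact compl_b a b

open Finset in
lemma sum_prod_le {ι : Type*} [DecidableEq ι] (s : Finset ι) (p x : ι → ℝ)
    (hp : ∀ i, 0 ≤ p i) (hx : ∀ i, 0 ≤ x i) :
    ∑ j ∈ s, x j * ∏ l ∈ s.erase j, p l ≤ ∏ l ∈ s, (p l + x l) := by
  induction s using Finset.induction_on with
  | empty => simp
  | insert i s hi ih =>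
    rw [sum_insert hi, prod_insert hi, erase_insert hi]
    have h1 : ∑ j ∈ s, x j * ∏ l ∈ (insert i s).erase j, p l
        = p i * ∑ j ∈ s, x j * ∏ l ∈ s.erase j, p l := by
      rw [mul_sum]
      apply sum_congr rfl
      intro j hj
      have : j ≠ i := fun h => hi (h ▸ hj)
      rw [erase_insert_of_ne this.symm, prod_insert (by simp [hi])]
      ring
    rw [h1, add_mul, add_comm]
    have h2 : ∏ l ∈ s, p l ≤ ∏ l ∈ s, (p l + x l) :=
      prod_le_prod (fun i _ => hp i) (fun i _ => by linarith [hx i])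
    gcongr
    · exact hp i
    · exact hx i

open Finset in
lemma sum_pair_prod_le {ι : Type*} [DecidableEq ι] (s : Finset ι) (p x : ι → ℝ)
    (hp : ∀ i, 0 ≤ p i) (hx : ∀ i, 0 ≤ x i) :
    ∑ j ∈ s, ∑ k ∈ s.erase j, x j * x k * ∏ l ∈ (s.erase j).erase k, p l
      ≤ 4 * ∏ l ∈ s, (p l + x l) := by
  have h1 := fun j => sum_prod_le (s.erase j) p (fun i => x i / 2) hp
    (fun i => by have := hx i; positivity)
  have h2 := sum_prod_le s (fun i => p i + x i / 2) (fun i => x i / 2)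
    (fun i => by have := hx i; have := hp i; positivity) (fun i => by have := hx i; positivity)
  have h3 : ∑ j ∈ s, ∑ k ∈ s.erase j, x j * x k * ∏ l ∈ (s.erase j).erase k, p l
      = 4 * ∑ j ∈ s, x j / 2 * ∑ k ∈ s.erase j, x k / 2 * ∏ l ∈ (s.erase j).erase k, p l := by
    simp_rw [mul_sum]
    apply sum_congr rfl; intro j _; apply sum_congr rfl; intro k _; ring
  rw [h3]
  calc _ ≤ 4 * ∑ j ∈ s, x j / 2 * ∏ l ∈ s.erase j, (p l + x l / 2) := by
        gcongr with j _
        · have := hx j; positivity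
        · exact h1 j
    _ ≤ 4 * ∏ l ∈ s, (p l + x l / 2 + x l / 2) := by gcongr
    _ = _ := by congr 1; apply prod_congr rfl; intro i _; ring

open Finset in
lemma core_comb {d : ℕ} (hd : 3 ≤ d) (p g h : Fin d → ℝ)
    (hp0 : ∀ i, 0 ≤ p i) (hp1 : ∀ i, p i ≤ 1)
    (hg : ∀ i, |g i| ≤ LL d * (1 - p i) + 1 / d)
    (hh : ∀ i, |h i| ≤ 2 * (LL d ^ 2 * (1 - p i) + 1 / d)) :
    ∑ j, |h j| * ∏ l ∈ univ.erase j, p l +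
    ∑ j, ∑ k ∈ univ.erase j, |g j| * |g k| * ∏ l ∈ (univ.erase j).erase k, p l
      ≤ 18 * LL d ^ 2 := by
  have hL : 1 ≤ LL d := by rw [LL]; linarith [sqrt_log_ge_one hd]
  have hdpos : (0:ℝ) < d := by positivity
  have hprod : ∏ l : Fin d, (p l + ((1 - p l) + 1 / d)) ≤ 3 := by
    have : ∀ l : Fin d, (p l + ((1 - p l) + 1 / d)) = 1 + 1 / (d:ℝ) := by intro l; ring
    simp_rw [this]
    rw [prod_const, card_univ, Fintype.card_fin]
    calc (1 + 1 / (d:ℝ)) ^ d ≤ Real.exp (1 / d) ^ d := by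
          gcongr
          linarith [Real.add_one_le_exp (1 / (d:ℝ))]
      _ = Real.exp 1 := by rw [← Real.exp_nat_mul]; congr 1; field_simp
      _ ≤ 3 := by linarith [Real.exp_one_lt_d9]
  have hx : ∀ i, 0 ≤ (1 - p i) + 1 / (d:ℝ) := fun i => by
    have := hp1 i
    have : (0:ℝ) ≤ 1 / d := by positivity
    linarith
  have e1 := sum_prod_le univ p (fun i => (1 - p i) + 1 / d) hp0 hx
  have e2 := sum_pair_prod_le univ p (fun i => (1 - p i) + 1 / d) hp0 hx
  have hg' : ∀ i, |g i| ≤ LL d * ((1 - p i) + 1 / d) := fun i => by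
    refine (hg i).trans ?_
    have : (0:ℝ) ≤ 1 / d := by positivity
    nlinarith
  have hh' : ∀ i, |h i| ≤ 2 * LL d ^ 2 * ((1 - p i) + 1 / d) := fun i => by
    refine (hh i).trans ?_
    have : (0:ℝ) ≤ 1 / d := by positivity
    have : 1 ≤ LL d ^ 2 := by nlinarith
    nlinarith
  have f1 : ∑ j, |h j| * ∏ l ∈ univ.erase j, p l ≤ 2 * LL d ^ 2 * 3 := by
    calc _ ≤ ∑ j, 2 * LL d ^ 2 * ((1 - p j) + 1 / d) * ∏ l ∈ univ.erase j, p l := by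
          gcongr with j _
          · exact prod_nonneg fun i _ => hp0 i
          · exact hh' j
      _ = 2 * LL d ^ 2 * ∑ j, ((1 - p j) + 1 / d) * ∏ l ∈ univ.erase j, p l := by
          rw [mul_sum]; apply sum_congr rfl; intro j _; ring
      _ ≤ _ := by gcongr; exact e1.trans hprod
  have f2 : ∑ j, ∑ k ∈ univ.erase j, |g j| * |g k| * ∏ l ∈ (univ.erase j).erase k, p l
      ≤ LL d ^ 2 * (4 * 3) := by
    calc _ ≤ ∑ j, ∑ k ∈ univ.erase j, (LL d * ((1 - p j) + 1 / d)) * (LL d * ((1 - p k) + 1 / d)) *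
          ∏ l ∈ (univ.erase j).erase k, p l := by
          gcongr with j _ k _
          · exact prod_nonneg fun i _ => hp0 i
          · have := hx j; positivity
          · exact hg' j
          · exact hg' k
      _ = LL d ^ 2 * ∑ j, ∑ k ∈ univ.erase j, ((1 - p j) + 1 / d) * ((1 - p k) + 1 / d) *
          ∏ l ∈ (univ.erase j).erase k, p l := by
          simp_rw [mul_sum]; apply sum_congr rfl; intro j _; apply sum_congr rfl; intro k _; ring
      _ ≤ _ := by
          gcongr
          refine e2.trans ?_
          gcongr
  linarith

end GC


namespace GC

/-- quadratic form -/
noncomputable def Q {d : ℕ} (S : Fin d → Fin d → ℝ) (x : Fin d → ℝ) : ℝ :=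
  ∑ j, ∑ k, x j * S j k * x k

/-- centred Gaussian law with covariance `S`, through the characteristic function -/
def IsG {d : ℕ} (ν : Measure (Fin d → ℝ)) (S : Fin d → Fin d → ℝ) : Prop :=
  IsProbabilityMeasure ν ∧ ∀ ξ : Fin d → ℝ,
    ∫ x, Complex.exp (((∑ j, ξ j * x j : ℝ) : ℂ) * Complex.I) ∂ν = Complex.exp (((-(Q S ξ) / 2 : ℝ)) : ℂ)

lemma cexp_meas {d : ℕ} (ξ : Fin d → ℝ) (ν : Measure (Fin d → ℝ)) : AEStronglyMeasurable
    (fun x : Fin d → ℝ => Complex.exp (((∑ j, ξ j * x j : ℝ) : ℂ) * Complex.I)) ν := by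
  have : Continuous (fun x : Fin d → ℝ => Complex.exp (((∑ j, ξ j * x j : ℝ) : ℂ) * Complex.I)) := by
    fun_prop
  exact this.aestronglyMeasurable

lemma IsG.unique {d : ℕ} {ν ν' : Measure (Fin d → ℝ)} {S : Fin d → Fin d → ℝ}
    (h : IsG ν S) (h' : IsG ν' S) : ν = ν' := by
  have := h.1
  have := h'.1
  apply Measure.ext_of_charFunDual
  ext L
  have hL : ∀ x, L x = ∑ j, L (Pi.single j 1) * x j := by
    intro x
    conv_lhs => rw [pi_eq_sum_univ' x]
    simp [map_sum, mul_comm]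
  rw [charFunDual_apply, charFunDual_apply]
  have e : (fun v => Complex.exp ((L v : ℂ) * Complex.I)) = fun v : Fin d → ℝ =>
      Complex.exp (((∑ j, L (Pi.single j 1) * v j : ℝ) : ℂ) * Complex.I) := by
    funext v; rw [hL v]
  rw [e, h.2 (fun j => L (Pi.single j 1)), h'.2 (fun j => L (Pi.single j 1))]

lemma exists_isG {d : ℕ} (S : Fin d → Fin d → ℝ) (hsymm : ∀ j k, S j k = S k j)
    (hpos : ∀ x, 0 ≤ Q S x) : ∃ ν, IsG ν S := by
  have hS : (Matrix.of S).PosSemidef := by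
    rw [Matrix.posSemidef_iff_dotProduct_mulVec]
    refine ⟨?_, fun x => ?_⟩
    · ext i j; simp [Matrix.conjTranspose_apply, hsymm]
    · have := hpos x
      simpa [Q, dotProduct, Matrix.mulVec, Finset.mul_sum, mul_assoc] using this
  refine ⟨(multivariateGaussian 0 (Matrix.of S)).map (WithLp.ofLp), ?_, fun ξ => ?_⟩
  · exact Measure.isProbabilityMeasure_map (by fun_prop)
  · rw [integral_map (by fun_prop) (cexp_meas _ _)]
    have h := charFun_multivariateGaussian (μ := 0) hS (WithLp.toLp 2 ξ)
    rw [charFun_apply] at h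
    simp only [PiLp.inner_apply] at h
    convert h using 2
    · ext x
      congr 3
    · simp [Q, dotProduct, Matrix.mulVec, Finset.mul_sum, mul_assoc, neg_div]

lemma IsG.add {d : ℕ} {ν ν' : Measure (Fin d → ℝ)} {S S' : Fin d → Fin d → ℝ}
    (h : IsG ν S) (h' : IsG ν' S') :
    IsG ((ν.prod ν').map (fun z => z.1 + z.2)) (fun j k => S j k + S' j k) := by
  have := h.1
  have := h'.1
  refine ⟨Measure.isProbabilityMeasure_map (by fun_prop), fun ξ => ?_⟩
  rw [integral_map (by fun_prop) (cexp_meas _ _)]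
  have e : ∀ z : (Fin d → ℝ) × (Fin d → ℝ),
      Complex.exp (((∑ j, ξ j * (z.1 + z.2) j : ℝ) : ℂ) * Complex.I)
      = Complex.exp (((∑ j, ξ j * z.1 j : ℝ) : ℂ) * Complex.I) *
        Complex.exp (((∑ j, ξ j * z.2 j : ℝ) : ℂ) * Complex.I) := by
    intro z
    rw [← Complex.exp_add, ← add_mul, ← Complex.ofReal_add, ← Finset.sum_add_distrib]
    simp [mul_add]
  simp_rw [e]
  rw [integral_prod_mul (fun x : Fin d → ℝ => Complex.exp (((∑ j, ξ j * x j : ℝ) : ℂ) * Complex.I))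
    (fun x : Fin d → ℝ => Complex.exp (((∑ j, ξ j * x j : ℝ) : ℂ) * Complex.I)), h.2, h'.2,
    ← Complex.exp_add, ← Complex.ofReal_add]
  congr 2
  simp only [Q, mul_add, add_mul, Finset.sum_add_distrib]
  ring

lemma IsG.smul {d : ℕ} {ν : Measure (Fin d → ℝ)} {S : Fin d → Fin d → ℝ}
    (h : IsG ν S) (c : ℝ) :
    IsG (ν.map (fun z => c • z)) (fun j k => c ^ 2 * S j k) := by
  have := h.1
  refine ⟨Measure.isProbabilityMeasure_map (by fun_prop), fun ξ => ?_⟩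
  rw [integral_map (by fun_prop) (cexp_meas _ _)]
  have := h.2 (fun j => c * ξ j)
  convert this using 3
  · simp; congr 2; apply Finset.sum_congr rfl; intro j _; ring
  · simp only [Q]
    congr 2
    apply Finset.sum_congr rfl; intro j _; apply Finset.sum_congr rfl; intro k _; ring

lemma IsG.marg {d : ℕ} {ν : Measure (Fin d → ℝ)} {S : Fin d → Fin d → ℝ}
    (h : IsG ν S) (j : Fin d) (hj : S j j = 1) : ν.map (fun x => x j) = gaussianReal 0 1 := by
  have := h.1
  have : IsProbabilityMeasure (ν.map (fun x => x j)) :=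
    Measure.isProbabilityMeasure_map (measurable_pi_apply j).aemeasurable
  apply Measure.ext_of_charFun
  ext t
  rw [charFun_gaussianReal, charFun_apply_real, integral_map (measurable_pi_apply j).aemeasurable (by fun_prop)]
  have h2 := h.2 (Pi.single j t)
  simp only [Q, Pi.single_apply, ite_mul, zero_mul, Finset.sum_ite_eq', Finset.mem_univ, if_true,
    mul_ite, mul_zero, hj] at h2
  convert h2 using 2
  · ext x; simp
  · simp; ring

lemma gauss_quad {Ω : Type} [MeasurableSpace Ω] {μ : Measure Ω} [IsProbabilityMeasure μ]
    {X : Ω → ℝ} (hX : Measurable X) {v : NNReal} (h : μ.map X = gaussianReal 0 v) :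
    MemLp X 2 μ ∧ ∫ ω, X ω ^ 2 ∂μ = v ∧
    ∫ ω, Complex.exp ((X ω : ℂ) * Complex.I) ∂μ = Complex.exp (((-(v : ℝ) / 2 : ℝ)) : ℂ) := by
  refine ⟨?_, ?_, ?_⟩
  · have h1 : MemLp id 2 (μ.map X) := by rw [h]; exact memLp_id_gaussianReal 2
    exact (memLp_map_measure_iff (by fun_prop) hX.aemeasurable).1 h1
  · have h1 := variance_fun_id_gaussianReal (μ := 0) (v := v)
    rw [variance_of_integral_eq_zero (by fun_prop) (by simp), ← h,
      integral_map hX.aemeasurable (by fun_prop)] at h1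
    exact h1
  · have h1 := charFun_gaussianReal (μ := 0) (v := v) 1
    rw [← h, charFun_apply_real, integral_map hX.aemeasurable (by fun_prop)] at h1
    simp at h1
    rw [h1]; simp [neg_div]

lemma law_facts {d : ℕ} {Ω : Type} [MeasurableSpace Ω] {μ : Measure Ω} [IsProbabilityMeasure μ]
    {Z : Ω → Fin d → ℝ} (hZ : Measurable Z)
    (hG : ∀ l : (Fin d → ℝ) →ₗ[ℝ] ℝ, ∃ v : NNReal, μ.map (fun ω => l (Z ω)) = gaussianReal 0 v)
    {S : Fin d → Fin d → ℝ} (hS : ∀ j k, ∫ ω, Z ω j * Z ω k ∂μ = S j k) :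
    IsG (μ.map Z) S ∧ (∀ j k, S j k = S k j) ∧ ∀ x, 0 ≤ Q S x := by
  have hmem : ∀ j, MemLp (fun ω => Z ω j) 2 μ := fun j => by
    obtain ⟨v, hv⟩ := hG (LinearMap.proj j)
    exact (gauss_quad (by fun_prop) hv).1
  have hQ : ∀ ξ : Fin d → ℝ, ∫ ω, (∑ j, ξ j * Z ω j) ^ 2 ∂μ = Q S ξ := by
    intro ξ
    have e : ∀ ω, (∑ j, ξ j * Z ω j) ^ 2 = ∑ j, ∑ k, (ξ j * ξ k) * (Z ω j * Z ω k) := by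
      intro ω
      rw [sq, Finset.sum_mul_sum]
      apply Finset.sum_congr rfl; intro j _; apply Finset.sum_congr rfl; intro k _; ring
    simp_rw [e]
    have hi : ∀ j k, Integrable (fun ω => (ξ j * ξ k) * (Z ω j * Z ω k)) μ := fun j k =>
      ((hmem j).integrable_mul (hmem k)).const_mul _
    rw [integral_finsetSum _ (fun j _ => integrable_finsetSum _ (fun k _ => hi j k))]
    simp_rw [integral_finsetSum _ (fun k _ => hi _ k), integral_const_mul, hS, Q]
    apply Finset.sum_congr rfl; intro j _; apply Finset.sum_congr rfl; intro k _; ring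
  refine ⟨⟨Measure.isProbabilityMeasure_map hZ.aemeasurable, fun ξ => ?_⟩, fun j k => ?_, fun x => ?_⟩
  · rw [integral_map hZ.aemeasurable (cexp_meas _ _)]
    obtain ⟨v, hv⟩ := hG (∑ j, ξ j • LinearMap.proj j)
    simp only [LinearMap.sum_apply, LinearMap.smul_apply, LinearMap.proj_apply, smul_eq_mul] at hv
    obtain ⟨-, h2, h3⟩ := gauss_quad (by fun_prop) hv
    rw [h3, ← h2, hQ]
  · rw [← hS, ← hS]; simp_rw [mul_comm]
  · rw [← hQ]; exact integral_nonneg fun ω => sq_nonneg _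

/-- conditional decomposition -/
lemma IsG.decomp {d : ℕ} {ν : Measure (Fin d → ℝ)} {S : Fin d → Fin d → ℝ}
    (h : IsG ν S) (hsymm : ∀ j k, S j k = S k j) (hpos : ∀ x, 0 ≤ Q S x)
    (j : Fin d) (hj : S j j = 1) :
    ∃ ρ : Measure (Fin d → ℝ), IsProbabilityMeasure ρ ∧
      ν = ((gaussianReal 0 1).prod ρ).map
        (fun z => fun k => if k = j then z.1 else z.2 k + S k j * z.1) := by
  have hQT : ∀ ξ, Q (fun k l => S k l - S k j * S j l) ξ = Q S ξ - (∑ k, S j k * ξ k) ^ 2 := by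
    intro ξ
    simp only [Q, mul_sub, sub_mul, Finset.sum_sub_distrib, sq, Finset.sum_mul_sum]
    congr 1
    apply Finset.sum_congr rfl; intro k _; apply Finset.sum_congr rfl; intro l _
    rw [hsymm k j]; ring
  have hTpos : ∀ ξ, 0 ≤ Q (fun k l => S k l - S k j * S j l) ξ := by
    intro ξ
    set c := ∑ k, S j k * ξ k with hc
    have h1 := hpos (fun k => ξ k - c * (if k = j then 1 else 0))
    have h2 : Q S (fun k => ξ k - c * (if k = j then 1 else 0)) = Q S ξ - c ^ 2 := by
      have : ∀ k l, (ξ k - c * (if k = j then 1 else 0)) * S k l * (ξ l - c * (if l = j then 1 else 0))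
        = ξ k * S k l * ξ l - (if l = j then c * (S l k * ξ k) else 0)
          - (if k = j then c * (S k l * ξ l) else 0)
          + (if k = j then (if l = j then c ^ 2 else 0) else 0) := by
        intro k l
        by_cases hk : k = j <;> by_cases hl : l = j
        · subst hk; subst hl; simp [hj]; ring
        · subst hk; simp [hl]; ring
        · subst hl; simp [hk, hsymm l k]; ring
        · simp [hk, hl]
      simp only [Q, this, Finset.sum_add_distrib, Finset.sum_sub_distrib, Finset.sum_ite_eq',
        Finset.mem_univ, if_true, ← Finset.mul_sum]
      rw [Finset.sum_comm (f := fun x y => if x = j then c * (S x y * ξ y) else 0)]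
      simp only [Finset.sum_ite_eq', Finset.mem_univ, if_true, ← Finset.mul_sum, ← hc]
      have h9 : ∑ x, (if x = j then ∑ y : Fin d, (if y = j then c ^ 2 else 0) else 0) = c ^ 2 := by simp
      have h10 : ∑ x : Fin d, ∑ y : Fin d, (if x = j then (if y = j then c ^ 2 else 0) else 0) = c ^ 2 := by
        rw [Finset.sum_comm]; simp
      rw [h10]; ring
    rw [hQT]; linarith
  obtain ⟨ρ, hρ⟩ := exists_isG (fun k l => S k l - S k j * S j l)
    (fun k l => by rw [hsymm k l, hsymm k j, hsymm l j]; ring) hTpos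
  have := hρ.1
  refine ⟨ρ, hρ.1, h.unique ⟨Measure.isProbabilityMeasure_map ?_, fun ξ => ?_⟩⟩
  · apply Measurable.aemeasurable
    rw [measurable_pi_iff]; intro k
    split_ifs <;> fun_prop
  · have hm : Measurable (fun z : ℝ × (Fin d → ℝ) => fun k => if k = j then z.1 else z.2 k + S k j * z.1) := by
      rw [measurable_pi_iff]; intro k
      split_ifs <;> fun_prop
    rw [integral_map hm.aemeasurable (cexp_meas _ _)]
    have e : ∀ z : ℝ × (Fin d → ℝ),
      Complex.exp (((∑ k, ξ k * (if k = j then z.1 else z.2 k + S k j * z.1) : ℝ) : ℂ) * Complex.I)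
      = Complex.exp ((((∑ k, S j k * ξ k) : ℝ) : ℂ) * ((z.1 : ℝ) : ℂ) * Complex.I) *
        Complex.exp (((∑ k, (if k = j then 0 else ξ k) * z.2 k : ℝ) : ℂ) * Complex.I) := by
      intro z
      rw [← Complex.exp_add, ← add_mul, ← Complex.ofReal_mul, ← Complex.ofReal_add, Finset.sum_mul,
        ← Finset.sum_add_distrib]
      congr 3
      apply Finset.sum_congr rfl; intro k _
      split_ifs with hk
      · subst hk; simp [hj]
      · rw [hsymm k j]; ring
    simp_rw [e]
    rw [integral_prod_mul (fun x : ℝ => Complex.exp ((((∑ k, S j k * ξ k) : ℝ) : ℂ) * ((x : ℝ) : ℂ) * Complex.I))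
      (fun x : Fin d → ℝ => Complex.exp (((∑ k, (if k = j then 0 else ξ k) * x k : ℝ) : ℂ) * Complex.I)),
      hρ.2, ← charFun_apply_real, charFun_gaussianReal]
    have h5 : Q (fun k l => S k l - S k j * S j l) (fun k => if k = j then 0 else ξ k)
        = Q (fun k l => S k l - S k j * S j l) ξ := by
      simp only [Q]
      apply Finset.sum_congr rfl; intro k _; apply Finset.sum_congr rfl; intro l _
      by_cases hk : k = j
      · subst hk; simp [hj]
      · by_cases hl : l = j
        · subst hl; simp [hj]
        · simp [hk, hl]
    rw [h5, hQT, ← Complex.exp_add]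
    congr 1
    push_cast
    simp
    ring

end GC


namespace GC

/-- Gaussian factor -/
noncomputable def ge (τ s : ℝ) : ℂ := ((Real.exp (-(τ ^ 2 * s ^ 2) / 2) : ℝ) : ℂ)

/-- Fourier transform of the indicator of an interval -/
noncomputable def psi (a b s : ℝ) : ℂ := ∫ x in a..b, Complex.exp (-((s * x : ℝ) : ℂ) * Complex.I)

lemma ge_cont (τ : ℝ) : Continuous (ge τ) := by unfold ge; fun_prop

lemma norm_ge (τ s : ℝ) : ‖ge τ s‖ = Real.exp (-(τ ^ 2 * s ^ 2) / 2) := by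
  rw [ge, Complex.norm_real, Real.norm_of_nonneg (Real.exp_pos _).le]

lemma norm_cexp_neg (s x : ℝ) : ‖Complex.exp (-((s * x : ℝ) : ℂ) * Complex.I)‖ = 1 := by
  rw [← Complex.ofReal_neg, Complex.norm_exp_ofReal_mul_I]

lemma norm_psi (a b s : ℝ) : ‖psi a b s‖ ≤ |b - a| := by
  have := intervalIntegral.norm_integral_le_of_norm_le_const (a := a) (b := b) (C := 1)
    (f := fun x => Complex.exp (-((s * x : ℝ) : ℂ) * Complex.I))
    (fun x _ => (norm_cexp_neg s x).le)
  simpa [psi] using this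

lemma psi_cont (a b : ℝ) : Continuous (psi a b) := by
  unfold psi
  apply intervalIntegral.continuous_parametric_intervalIntegral_of_continuous'
  simp only [Function.uncurry_def]
  fun_prop

lemma mul_psi (a b s : ℝ) : (s : ℂ) * Complex.I * psi a b s =
    Complex.exp (-((s * a : ℝ) : ℂ) * Complex.I) - Complex.exp (-((s * b : ℝ) : ℂ) * Complex.I) := by
  have h : ∀ x ∈ Set.uIcc a b, HasDerivAt (fun x : ℝ => -Complex.exp (-((s * x : ℝ) : ℂ) * Complex.I))
      ((s : ℂ) * Complex.I * Complex.exp (-((s * x : ℝ) : ℂ) * Complex.I)) x := by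
    intro x _
    have h1 : HasDerivAt (fun x : ℝ => -((s * x : ℝ) : ℂ) * Complex.I) (-(s : ℂ) * Complex.I) x := by
      have h0 : HasDerivAt (fun x : ℝ => ((x : ℝ) : ℂ)) 1 x := Complex.ofRealCLM.hasDerivAt
      have := ((h0.const_mul (s:ℂ)).neg).mul_const Complex.I
      simpa using this
    refine h1.cexp.neg.congr_deriv ?_
    ring
  have h2 := intervalIntegral.integral_eq_sub_of_hasDerivAt h (by
    apply Continuous.intervalIntegrable; fun_prop)
  rw [intervalIntegral.integral_const_mul] at h2
  rw [psi, h2]; ring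

lemma integrable_pow_ge {τ : ℝ} (hτ : 0 < τ) (m : ℕ) :
    Integrable (fun s : ℝ => |s| ^ m * Real.exp (-(τ ^ 2 * s ^ 2) / 2)) := by
  have h := (integrable_rpow_mul_exp_neg_mul_sq (b := τ ^ 2 / 2) (by positivity) (s := (m : ℝ))
    (by have : (0:ℝ) ≤ m := by positivity
        linarith)).norm
  refine h.congr (Filter.Eventually.of_forall fun s => ?_)
  simp only [Real.rpow_natCast, norm_mul, norm_pow, Real.norm_eq_abs, Real.abs_exp]
  congr 2; ring

lemma integrable_kk {τ : ℝ} (hτ : 0 < τ) (m : ℕ) (f : ℝ → ℂ) (hf : Continuous f) (c : ℝ)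
    (hc : ∀ s, ‖f s‖ ≤ c) : Integrable (fun s : ℝ => ((s : ℂ) * Complex.I) ^ m * f s * ge τ s) := by
  apply ((integrable_pow_ge hτ m).const_mul c).mono'
  · have := ge_cont τ
    exact Continuous.aestronglyMeasurable (by fun_prop)
  · refine Filter.Eventually.of_forall fun s => ?_
    rw [norm_mul, norm_mul, norm_pow, norm_ge]
    simp only [norm_mul, Complex.norm_real, Complex.norm_I, mul_one, Real.norm_eq_abs]
    rw [← mul_assoc, mul_comm c]
    gcongr
    exact hc s

lemma E1 {τ : ℝ} (hτ : 0 < τ) (x : ℝ) :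
    ∫ s : ℝ, Complex.exp (((s * x : ℝ) : ℂ) * Complex.I) * ge τ s
      = ((2 * Real.pi * (gaussianPDFReal 0 1 (x / τ) / τ) : ℝ) : ℂ) := by
  have h := fourierIntegral_gaussian (b := ((τ ^ 2 / 2 : ℝ) : ℂ)) (by
    rw [Complex.ofReal_re]; positivity) (x : ℂ)
  have e : ∀ s : ℝ, Complex.exp (((s * x : ℝ) : ℂ) * Complex.I) * ge τ s =
    Complex.exp (Complex.I * x * s) * Complex.exp (-((τ ^ 2 / 2 : ℝ) : ℂ) * (s : ℂ) ^ 2) := by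
    intro s
    rw [ge, Complex.ofReal_exp]
    congr 2
    · push_cast; ring
    · push_cast; ring
  simp_rw [e, h]
  rw [← Complex.ofReal_div, show (1 / 2 : ℂ) = ((1 / 2 : ℝ) : ℂ) by push_cast; rfl,
    ← Complex.ofReal_cpow (by positivity), ← Real.sqrt_eq_rpow]
  have : Complex.exp (-(x : ℂ) ^ 2 / (4 * ((τ ^ 2 / 2 : ℝ) : ℂ))) =
      ((Real.exp (-(x / τ) ^ 2 / 2) : ℝ) : ℂ) := by
    rw [Complex.ofReal_exp]
    congr 1
    push_cast
    field_simp
    norm_num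
  rw [this, ← Complex.ofReal_mul, pdf01]
  congr 1
  have h3 : √(Real.pi / (τ ^ 2 / 2)) = √(2 * Real.pi) / τ := by
    rw [show Real.pi / (τ ^ 2 / 2) = 2 * Real.pi / τ ^ 2 by field_simp, Real.sqrt_div' _ (by positivity),
      Real.sqrt_sq hτ.le]
  rw [h3]
  have h4 : 2 * Real.pi = √(2 * Real.pi) * √(2 * Real.pi) := (Real.mul_self_sqrt (by positivity)).symm
  have h5 : √(2 * Real.pi) ≠ 0 := by positivity
  conv_rhs => rw [h4]
  rw [← h4]
  field_simp
  rw [Real.sq_sqrt (by positivity)]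

lemma E2 {τ : ℝ} (hτ : 0 < τ) (x : ℝ) :
    ∫ s : ℝ, ((s : ℂ) * Complex.I) * (Complex.exp (((s * x : ℝ) : ℂ) * Complex.I) * ge τ s)
      = ((2 * Real.pi * (-(x / τ) * gaussianPDFReal 0 1 (x / τ) / τ ^ 2) : ℝ) : ℂ) := by
  have hn : ∀ s : ℝ, ‖Complex.exp (((s * x : ℝ) : ℂ) * Complex.I)‖ ≤ 1 := fun s => by
    rw [Complex.norm_exp_ofReal_mul_I]
  have hc : Continuous (fun s : ℝ => Complex.exp (((s * x : ℝ) : ℂ) * Complex.I)) := by fun_prop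
  have i0 := integrable_kk hτ 0 _ hc 1 hn
  have i1 := integrable_kk hτ 1 _ hc 1 hn
  simp only [pow_zero, one_mul, pow_one, mul_assoc] at i0 i1
  have hd : ∀ s : ℝ, HasDerivAt (fun s : ℝ => Complex.exp (((s * x : ℝ) : ℂ) * Complex.I) * ge τ s)
      ((x : ℂ) * Complex.I * (Complex.exp (((s * x : ℝ) : ℂ) * Complex.I) * ge τ s)
       + Complex.I * (τ : ℂ) ^ 2 * (((s : ℂ) * (Complex.I * (Complex.exp (((s * x : ℝ) : ℂ) * Complex.I) * ge τ s))))) s := by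
    intro s
    have h0 : HasDerivAt (fun s : ℝ => ((s : ℝ) : ℂ)) 1 s := Complex.ofRealCLM.hasDerivAt
    have h1 : HasDerivAt (fun s : ℝ => ((s * x : ℝ) : ℂ) * Complex.I) ((x : ℂ) * Complex.I) s := by
      simpa using (h0.mul_const (x:ℂ)).mul_const Complex.I
    have h2 : HasDerivAt (fun s : ℝ => Real.exp (-(τ ^ 2 * s ^ 2) / 2))
        (Real.exp (-(τ ^ 2 * s ^ 2) / 2) * (-(τ ^ 2 * s))) s := by
      have : HasDerivAt (fun s : ℝ => -(τ ^ 2 * s ^ 2) / 2) (-(τ ^ 2 * s)) s := by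
        refine ((((hasDerivAt_id s).pow 2).const_mul (τ ^ 2)).neg.div_const 2).congr_deriv ?_
        simp
        ring
      exact this.exp
    have h3 : HasDerivAt (ge τ) (ge τ s * (-(τ ^ 2 * s))) s := by
      refine h2.ofReal_comp.congr_deriv ?_
      rw [ge]; push_cast; ring
    refine (h1.cexp.mul h3).congr_deriv ?_
    linear_combination -(τ : ℂ) ^ 2 * s * (Complex.exp (((s * x : ℝ) : ℂ) * Complex.I) * ge τ s) * Complex.I_sq
  have hz := integral_eq_zero_of_hasDerivAt_of_integrable hd
    ((i0.const_mul _).add (i1.const_mul _)) i0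
  rw [integral_add (i0.const_mul _) (i1.const_mul _), integral_const_mul, integral_const_mul, E1 hτ] at hz
  simp_rw [mul_assoc]
  have hτ' : (τ : ℂ) ≠ 0 := by exact_mod_cast hτ.ne'
  have h7 : (Complex.I * (τ : ℂ) ^ 2) ≠ 0 := mul_ne_zero Complex.I_ne_zero (pow_ne_zero _ hτ')
  apply mul_left_cancel₀ h7
  rw [eq_neg_of_add_eq_zero_right hz]
  push_cast
  field_simp

/-- the three one-dimensional kernels -/
noncomputable def KK (τ a b y : ℝ) : ℕ → ℝ
  | 0 => pp ((a - y) / τ) ((b - y) / τ)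
  | 1 => (gaussianPDFReal 0 1 ((a - y) / τ) - gaussianPDFReal 0 1 ((b - y) / τ)) / τ
  | _ => ((a - y) / τ * gaussianPDFReal 0 1 ((a - y) / τ)
      - (b - y) / τ * gaussianPDFReal 0 1 ((b - y) / τ)) / τ ^ 2

lemma pdf_neg (x : ℝ) : gaussianPDFReal 0 1 (-x) = gaussianPDFReal 0 1 x := by
  rw [pdf01, pdf01]; simp

lemma K0 {τ : ℝ} (hτ : 0 < τ) {a b : ℝ} (hab : a ≤ b) (y : ℝ) :
    ∫ s : ℝ, (psi a b s * ge τ s) * Complex.exp (((s * y : ℝ) : ℂ) * Complex.I)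
      = ((2 * Real.pi * KK τ a b y 0 : ℝ) : ℂ) := by
  have e : ∀ s : ℝ, (psi a b s * ge τ s) * Complex.exp (((s * y : ℝ) : ℂ) * Complex.I)
      = ∫ x in a..b, Complex.exp (((s * (y - x) : ℝ) : ℂ) * Complex.I) * ge τ s := by
    intro s
    rw [intervalIntegral.integral_mul_const, psi, mul_right_comm, ← intervalIntegral.integral_mul_const]
    congr 2
    ext x
    rw [← Complex.exp_add]; congr 1; push_cast; ring
  simp_rw [e]
  rw [← intervalIntegral_integral_swap]
  · simp_rw [E1 hτ]
    rw [intervalIntegral.integral_ofReal, intervalIntegral.integral_const_mul]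
    congr 2
    rw [KK, pp, real_gauss, ← intervalIntegral.integral_of_le (by gcongr)]
    rw [intervalIntegral.integral_div]
    have : ∀ x, gaussianPDFReal 0 1 ((y - x) / τ) = gaussianPDFReal 0 1 (y / τ - x / τ) := by
      intro x; rw [sub_div]
    simp_rw [this]
    have h2 : ∀ x, gaussianPDFReal 0 1 (y / τ - x / τ) = gaussianPDFReal 0 1 (x / τ - y / τ) := by
      intro x; rw [← pdf_neg]; congr 1; ring
    simp_rw [h2]
    rw [intervalIntegral.integral_comp_div_sub _ hτ.ne', smul_eq_mul, ← sub_div, ← sub_div]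
    field_simp
  · have h1 : Integrable (fun z : ℝ × ℝ => (1 : ℝ) * Real.exp (-(τ ^ 2 * z.2 ^ 2) / 2))
        ((volume.restrict (Set.uIoc a b)).prod volume) := by
      refine Integrable.mul_prod (f := fun _ : ℝ => (1:ℝ))
        (g := fun s : ℝ => Real.exp (-(τ ^ 2 * s ^ 2) / 2)) ?_ ?_
      · rw [Set.uIoc_of_le hab]; exact integrable_const _
      · simpa using integrable_pow_ge hτ 0
    apply h1.mono'
    · have := ge_cont τ
      apply Continuous.aestronglyMeasurable
      simp only [Function.uncurry_def]
      fun_prop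
    · refine Filter.Eventually.of_forall fun z => ?_
      simp only [Function.uncurry_def]
      rw [norm_mul, norm_ge, Complex.norm_exp_ofReal_mul_I]

lemma K1 {τ : ℝ} (hτ : 0 < τ) (a b : ℝ) (y : ℝ) :
    ∫ s : ℝ, (((s : ℂ) * Complex.I) * psi a b s * ge τ s) * Complex.exp (((s * y : ℝ) : ℂ) * Complex.I)
      = ((2 * Real.pi * KK τ a b y 1 : ℝ) : ℂ) := by
  have e : ∀ s : ℝ, (((s : ℂ) * Complex.I) * psi a b s * ge τ s) * Complex.exp (((s * y : ℝ) : ℂ) * Complex.I)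
      = Complex.exp (((s * (y - a) : ℝ) : ℂ) * Complex.I) * ge τ s
        - Complex.exp (((s * (y - b) : ℝ) : ℂ) * Complex.I) * ge τ s := by
    intro s
    have : ∀ c : ℝ, Complex.exp (((s * (y - c) : ℝ) : ℂ) * Complex.I)
      = Complex.exp (-((s * c : ℝ) : ℂ) * Complex.I) * Complex.exp (((s * y : ℝ) : ℂ) * Complex.I) := by
      intro c; rw [← Complex.exp_add]; congr 1; push_cast; ring
    rw [mul_psi, this, this]; ring
  have i : ∀ x : ℝ, Integrable (fun s : ℝ => Complex.exp (((s * x : ℝ) : ℂ) * Complex.I) * ge τ s) := fun x => by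
    simpa using integrable_kk hτ 0 (fun s : ℝ => Complex.exp (((s * x : ℝ) : ℂ) * Complex.I)) (by fun_prop) 1
      (fun s => by rw [Complex.norm_exp_ofReal_mul_I])
  simp_rw [e]
  rw [integral_sub (i _) (i _), E1 hτ, E1 hτ, ← Complex.ofReal_sub]
  congr 1
  simp only [KK]
  rw [← pdf_neg ((a - y) / τ), ← pdf_neg ((b - y) / τ), ← neg_div, ← neg_div, neg_sub, neg_sub]
  ring

lemma K2 {τ : ℝ} (hτ : 0 < τ) (a b : ℝ) (y : ℝ) :
    ∫ s : ℝ, (((s : ℂ) * Complex.I) ^ 2 * psi a b s * ge τ s) * Complex.exp (((s * y : ℝ) : ℂ) * Complex.I)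
      = ((2 * Real.pi * KK τ a b y 2 : ℝ) : ℂ) := by
  have e : ∀ s : ℝ, (((s : ℂ) * Complex.I) ^ 2 * psi a b s * ge τ s) * Complex.exp (((s * y : ℝ) : ℂ) * Complex.I)
      = ((s : ℂ) * Complex.I) * (Complex.exp (((s * (y - a) : ℝ) : ℂ) * Complex.I) * ge τ s)
        - ((s : ℂ) * Complex.I) * (Complex.exp (((s * (y - b) : ℝ) : ℂ) * Complex.I) * ge τ s) := by
    intro s
    have : ∀ c : ℝ, Complex.exp (((s * (y - c) : ℝ) : ℂ) * Complex.I)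
      = Complex.exp (-((s * c : ℝ) : ℂ) * Complex.I) * Complex.exp (((s * y : ℝ) : ℂ) * Complex.I) := by
      intro c; rw [← Complex.exp_add]; congr 1; push_cast; ring
    rw [sq, mul_assoc _ _ (psi a b s), mul_psi, this, this]; ring
  have i : ∀ x : ℝ, Integrable (fun s : ℝ => ((s : ℂ) * Complex.I) * (Complex.exp (((s * x : ℝ) : ℂ) * Complex.I) * ge τ s)) := fun x => by
    simpa [mul_assoc] using integrable_kk hτ 1 (fun s : ℝ => Complex.exp (((s * x : ℝ) : ℂ) * Complex.I)) (by fun_prop) 1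
      (fun s => by rw [Complex.norm_exp_ofReal_mul_I])
  simp_rw [e]
  rw [integral_sub (i _) (i _), E2 hτ, E2 hτ, ← Complex.ofReal_sub]
  congr 1
  simp only [KK]
  rw [← pdf_neg ((a - y) / τ), ← pdf_neg ((b - y) / τ), ← neg_div, ← neg_div, neg_sub, neg_sub]
  ring

lemma Kall {τ : ℝ} (hτ : 0 < τ) {a b : ℝ} (hab : a ≤ b) (y : ℝ) (m : ℕ) (hm : m ≤ 2) :
    ∫ s : ℝ, (((s : ℂ) * Complex.I) ^ m * psi a b s * ge τ s) * Complex.exp (((s * y : ℝ) : ℂ) * Complex.I)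
      = ((2 * Real.pi * KK τ a b y m : ℝ) : ℂ) := by
  interval_cases m
  · simpa using K0 hτ hab y
  · simpa using K1 hτ a b y
  · exact K2 hτ a b y

end GC


namespace GC

lemma fub {d : ℕ} {ν : Measure (Fin d → ℝ)} {T : Fin d → Fin d → ℝ} (h : IsG ν T)
    (f : Fin d → ℝ → ℂ) (hf : ∀ l, Integrable (f l)) (hfc : ∀ l, Continuous (f l)) :
    ∫ ξ : Fin d → ℝ, (∏ l, f l (ξ l)) * Complex.exp (((-(Q T ξ) / 2 : ℝ)) : ℂ)
      = ∫ y, ∏ l, (∫ s : ℝ, f l s * Complex.exp (((s * y l : ℝ) : ℂ) * Complex.I)) ∂ν := by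
  have := h.1
  have e : ∀ y : Fin d → ℝ, ∏ l, (∫ s : ℝ, f l s * Complex.exp (((s * y l : ℝ) : ℂ) * Complex.I))
      = ∫ ξ : Fin d → ℝ, (∏ l, f l (ξ l)) *
          Complex.exp (((∑ j, ξ j * y j : ℝ) : ℂ) * Complex.I) := by
    intro y
    rw [← integral_fintype_prod_volume_eq_prod]
    congr 1
    ext ξ
    rw [Finset.prod_mul_distrib, ← Complex.exp_sum, ← Finset.sum_mul]
    push_cast; rfl
  simp_rw [e]
  rw [integral_integral_swap]
  · congr 1
    ext ξ
    rw [integral_const_mul, h.2]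
  · have hp : Integrable (fun ξ : Fin d → ℝ => ∏ l, f l (ξ l)) :=
      Integrable.fintype_prod hf
    have h1 : Integrable (fun z : (Fin d → ℝ) × (Fin d → ℝ) => (1 : ℝ) * ‖∏ l, f l (z.2 l)‖)
        (ν.prod volume) :=
      Integrable.mul_prod (f := fun _ : Fin d → ℝ => (1:ℝ)) (g := fun ξ : Fin d → ℝ => ‖∏ l, f l (ξ l)‖)
        (integrable_const _) hp.norm
    apply h1.mono'
    · apply Continuous.aestronglyMeasurable
      simp only [Function.uncurry_def]
      fun_prop
    · refine Filter.Eventually.of_forall fun z => ?_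
      simp only [Function.uncurry_def]
      rw [norm_mul, Complex.norm_exp_ofReal_mul_I, mul_one, one_mul]

lemma isG_pi (d : ℕ) : IsG (Measure.pi (fun _ : Fin d => gaussianReal 0 1))
    (fun j k => if j = k then 1 else 0) := by
  refine ⟨inferInstance, fun ξ => ?_⟩
  have e : ∀ x : Fin d → ℝ, Complex.exp (((∑ j, ξ j * x j : ℝ) : ℂ) * Complex.I)
      = ∏ j, Complex.exp ((ξ j : ℂ) * (x j : ℂ) * Complex.I) := by
    intro x
    rw [← Complex.exp_sum, ← Finset.sum_mul]; push_cast; rfl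
  simp_rw [e]
  rw [integral_fintype_prod_eq_prod (fun j (x : ℝ) => Complex.exp ((ξ j : ℂ) * (x : ℂ) * Complex.I))]
  simp_rw [← charFun_apply_real, charFun_gaussianReal, ← Complex.exp_sum]
  congr 1
  have hQ : Q (fun j k : Fin d => if j = k then (1:ℝ) else 0) ξ = ∑ j, ξ j ^ 2 := by
    simp [Q, sq]
  rw [hQ, neg_div, Finset.sum_div, ← Finset.sum_neg_distrib, Complex.ofReal_sum]
  apply Finset.sum_congr rfl; intro j _
  push_cast
  simp
  try ring

lemma smooth_prob {d : ℕ} {ν ν₀ : Measure (Fin d → ℝ)} {S T : Fin d → Fin d → ℝ}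
    (h : IsG ν S) (h₀ : IsG ν₀ T) {τ : ℝ} (hτ : 0 < τ)
    (hST : ∀ j k, S j k = T j k + τ ^ 2 * (if j = k then 1 else 0)) (a b : Fin d → ℝ) :
    ν.real {x | ∀ j, a j < x j ∧ x j ≤ b j} = ∫ y, ∏ l, KK τ (a l) (b l) (y l) 0 ∂ν₀ := by
  have := h.1
  have := h₀.1
  have hA : MeasurableSet {x : Fin d → ℝ | ∀ j, a j < x j ∧ x j ≤ b j} := by
    have : {x : Fin d → ℝ | ∀ j, a j < x j ∧ x j ≤ b j} = Set.univ.pi (fun j => Set.Ioc (a j) (b j)) := by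
      ext x; simp [Set.mem_pi]
    rw [this]; exact MeasurableSet.univ_pi fun j => measurableSet_Ioc
  have h1 := h₀.add ((isG_pi d).smul τ)
  have h2 : S = (fun j k => T j k + τ ^ 2 * (if j = k then 1 else 0)) := by ext j k; exact hST j k
  rw [h2] at h
  have hp : IsProbabilityMeasure ((Measure.pi (fun _ : Fin d => gaussianReal 0 1)).map (fun z => τ • z)) :=
    ((isG_pi d).smul τ).1
  rw [h.unique h1, Measure.real, Measure.map_apply (by fun_prop) hA, Measure.prod_apply
    (by exact measurableSet_preimage (by fun_prop) hA), ← integral_toReal]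
  · congr 1
    ext y
    rw [Measure.map_apply (by fun_prop) (by
      apply measurableSet_preimage (by fun_prop)
      exact measurableSet_preimage (by fun_prop) hA)]
    have : ((fun z : Fin d → ℝ => τ • z) ⁻¹' (Prod.mk y ⁻¹' ((fun z : (Fin d → ℝ) × (Fin d → ℝ) => z.1 + z.2) ⁻¹'
        {x | ∀ j, a j < x j ∧ x j ≤ b j})))
        = Set.univ.pi (fun l => Set.Ioc ((a l - y l) / τ) ((b l - y l) / τ)) := by
      ext z
      simp only [Set.mem_preimage, Set.mem_ofPred_eq, Set.mem_pi, Set.mem_univ, true_implies, Set.mem_Ioc,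
        Pi.add_apply, Pi.smul_apply, smul_eq_mul, div_lt_iff₀ hτ, le_div_iff₀ hτ]
      apply forall_congr'; intro l
      constructor <;> rintro ⟨h1, h2⟩ <;> constructor <;> linarith
    rw [this, Measure.pi_pi, ENNReal.toReal_prod]
    rfl
  · exact (measurable_measure_prodMk_left (measurableSet_preimage (by fun_prop) hA)).aemeasurable
  · exact Filter.Eventually.of_forall fun y => measure_lt_top _ _

/-- exponents -/
def mm {d : ℕ} (j k l : Fin d) : ℕ := (if l = j then 1 else 0) + (if l = k then 1 else 0)

lemma mm_le {d : ℕ} (j k l : Fin d) : mm j k l ≤ 2 := by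
  unfold mm; split_ifs <;> simp

lemma prod_ge {d : ℕ} (τ : ℝ) (ξ : Fin d → ℝ) :
    ∏ l, ge τ (ξ l) = Complex.exp (((-(τ ^ 2 * ∑ l, ξ l ^ 2) / 2 : ℝ)) : ℂ) := by
  simp only [ge, Complex.ofReal_exp]
  rw [← Complex.exp_sum, ← Complex.ofReal_sum, Finset.mul_sum, neg_div, Finset.sum_div, ← Finset.sum_neg_distrib]
  simp [neg_div]

lemma prod_mm {d : ℕ} (j k : Fin d) (z : Fin d → ℂ) :
    ∏ l, z l ^ (mm j k l) = z j * z k := by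
  simp only [mm, pow_add, Finset.prod_mul_distrib, pow_ite, pow_one, pow_zero, Finset.prod_ite_eq',
    Finset.mem_univ, if_true]

lemma QS {d : ℕ} {S T : Fin d → Fin d → ℝ} {c : ℝ}
    (hST : ∀ j k, S j k = T j k + c * (if j = k then 1 else 0)) (ξ : Fin d → ℝ) :
    Q S ξ = Q T ξ + c * ∑ l, ξ l ^ 2 := by
  simp only [Q, hST, mul_add, add_mul, Finset.sum_add_distrib]
  congr 1
  simp [Finset.mul_sum]
  apply Finset.sum_congr rfl; intro j _; ring

lemma fourier_gen {d : ℕ} {ν₀ : Measure (Fin d → ℝ)} {S T : Fin d → Fin d → ℝ}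
    (h₀ : IsG ν₀ T) {τ : ℝ} (hτ : 0 < τ)
    (hST : ∀ j k, S j k = T j k + τ ^ 2 * (if j = k then 1 else 0)) (a b : Fin d → ℝ)
    (hab : ∀ j, a j ≤ b j) (m : Fin d → ℕ) (hm : ∀ l, m l ≤ 2) :
    ∫ ξ : Fin d → ℝ, (∏ l, ((ξ l : ℂ) * Complex.I) ^ (m l)) * (∏ l, psi (a l) (b l) (ξ l)) *
        Complex.exp (((-(Q S ξ) / 2 : ℝ)) : ℂ)
      = (((2 * Real.pi) ^ d * ∫ y, ∏ l, KK τ (a l) (b l) (y l) (m l) ∂ν₀ : ℝ) : ℂ) := by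
  have hf := fub h₀ (fun l s => ((s : ℂ) * Complex.I) ^ (m l) * psi (a l) (b l) s * ge τ s)
    (fun l => integrable_kk hτ _ _ (psi_cont _ _) _ (norm_psi _ _))
    (fun l => by
      have := psi_cont (a l) (b l)
      have := ge_cont τ
      fun_prop)
  simp_rw [fun (l : Fin d) (y : ℝ) => Kall hτ (hab l) y (m l) (hm l)] at hf
  simp_rw [← Complex.ofReal_prod] at hf
  rw [integral_complex_ofReal] at hf
  simp_rw [Finset.prod_mul_distrib, Finset.prod_const, Finset.card_univ, Fintype.card_fin, ← mul_pow] at hf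
  rw [integral_const_mul] at hf
  rw [← hf]
  congr 1
  ext ξ
  rw [prod_ge, mul_assoc _ (Complex.exp _), ← Complex.exp_add, ← Complex.ofReal_add, QS hST]
  congr 4
  ring

lemma KK_bounds {d : ℕ} (hd : 3 ≤ d) {τ : ℝ} (hτ : 0 < τ) (a b y : ℝ) :
    |τ * KK τ a b y 1| ≤ LL d * (1 - KK τ a b y 0) + 1 / d ∧
    |τ ^ 2 * KK τ a b y 2| ≤ 2 * (LL d ^ 2 * (1 - KK τ a b y 0) + 1 / d) := by
  obtain ⟨h1, h2⟩ := mills_a hd ((a - y) / τ) ((b - y) / τ)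
  obtain ⟨h3, h4⟩ := mills_b hd ((a - y) / τ) ((b - y) / τ)
  have p1 := gaussianPDFReal_nonneg 0 1 ((a - y) / τ)
  have p2 := gaussianPDFReal_nonneg 0 1 ((b - y) / τ)
  simp only [KK]
  rw [mul_div_cancel₀ _ hτ.ne', mul_div_cancel₀ _ (by positivity)]
  constructor
  · rw [abs_le]; constructor <;> linarith
  · refine (abs_sub _ _).trans ?_
    rw [abs_mul, abs_mul, abs_of_nonneg p1, abs_of_nonneg p2]
    linarith

lemma KK0_nonneg (τ a b y : ℝ) : 0 ≤ KK τ a b y 0 := pp_nonneg _ _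
lemma KK0_le (τ a b y : ℝ) : KK τ a b y 0 ≤ 1 := pp_le_one _ _

open Finset in
lemma prod_KK_split {d : ℕ} (τ : ℝ) (a b y : Fin d → ℝ) (j k : Fin d) :
    ∏ l, KK τ (a l) (b l) (y l) (mm j k l) =
      if j = k then KK τ (a j) (b j) (y j) 2 * ∏ l ∈ univ.erase j, KK τ (a l) (b l) (y l) 0
      else KK τ (a j) (b j) (y j) 1 * (KK τ (a k) (b k) (y k) 1 *
        ∏ l ∈ (univ.erase j).erase k, KK τ (a l) (b l) (y l) 0) := by
  split_ifs with hjk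
  · subst hjk
    rw [← mul_prod_erase univ _ (mem_univ j)]
    congr 1
    · simp [mm]
    · apply prod_congr rfl; intro l hl
      have : l ≠ j := ne_of_mem_erase hl
      simp [mm, this]
  · rw [← mul_prod_erase univ _ (mem_univ j), ← mul_prod_erase (univ.erase j) _ (show k ∈ _ by simp [Ne.symm hjk])]
    congr 1
    · simp [mm, hjk]
    · congr 1
      · simp [mm, Ne.symm hjk]
      · apply prod_congr rfl; intro l hl
        have h1 : l ≠ k := ne_of_mem_erase hl
        have h2 : l ≠ j := ne_of_mem_erase (mem_of_mem_erase hl)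
        simp [mm, h1, h2]

open Finset in
lemma sum_KK {d : ℕ} (hd : 3 ≤ d) {τ : ℝ} (hτ : 0 < τ) (a b y : Fin d → ℝ) :
    ∑ j, ∑ k, |∏ l, KK τ (a l) (b l) (y l) (mm j k l)| ≤ 18 * LL d ^ 2 / τ ^ 2 := by
  have h := core_comb hd (fun l => KK τ (a l) (b l) (y l) 0) (fun l => τ * KK τ (a l) (b l) (y l) 1)
    (fun l => τ ^ 2 * KK τ (a l) (b l) (y l) 2) (fun l => KK0_nonneg _ _ _ _) (fun l => KK0_le _ _ _ _)
    (fun l => (KK_bounds hd hτ _ _ _).1) (fun l => (KK_bounds hd hτ _ _ _).2)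
  rw [le_div_iff₀ (by positivity)]
  refine le_trans (le_of_eq ?_) h
  rw [← sum_add_distrib, sum_mul]
  apply sum_congr rfl
  intro j _
  rw [← add_sum_erase univ _ (mem_univ j), add_mul, sum_mul]
  have hprod : ∀ s : Finset (Fin d), |∏ l ∈ s, KK τ (a l) (b l) (y l) 0| = ∏ l ∈ s, KK τ (a l) (b l) (y l) 0 :=
    fun s => abs_of_nonneg (prod_nonneg fun l _ => KK0_nonneg _ _ _ _)
  congr 1
  · rw [prod_KK_split, if_pos rfl, abs_mul, abs_mul, hprod, abs_of_pos (show 0 < τ ^ 2 by positivity)]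
    ring
  · apply sum_congr rfl
    intro k hk
    rw [prod_KK_split, if_neg (ne_of_mem_erase hk).symm, abs_mul, abs_mul, abs_mul, abs_mul, hprod, abs_of_pos hτ]
    ring

end GC


namespace GC

lemma Q_cont {d : ℕ} (S : Fin d → Fin d → ℝ) : Continuous (Q S) := by
  unfold Q; fun_prop

lemma integ_term {d : ℕ} {S : Fin d → Fin d → ℝ} {c : ℝ} (hc : 0 < c)
    (hS : ∀ ξ, c ^ 2 * ∑ l, ξ l ^ 2 ≤ Q S ξ) (a b : Fin d → ℝ) (m : Fin d → ℕ) :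
    Integrable (fun ξ : Fin d → ℝ => (∏ l, ((ξ l : ℂ) * Complex.I) ^ (m l)) *
      (∏ l, psi (a l) (b l) (ξ l)) * Complex.exp (((-(Q S ξ) / 2 : ℝ)) : ℂ)) := by
  have h1 : Integrable (fun ξ : Fin d → ℝ => ∏ l, (((ξ l : ℂ) * Complex.I) ^ (m l) *
      psi (a l) (b l) (ξ l) * ge c (ξ l))) :=
    Integrable.fintype_prod (f := fun l (s : ℝ) => ((s : ℂ) * Complex.I) ^ (m l) * psi (a l) (b l) s * ge c s)
      fun l => integrable_kk hc _ _ (psi_cont _ _) _ (norm_psi _ _)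
  apply h1.mono
  · have h2 := Q_cont S
    have h3 := fun l => psi_cont (a l) (b l)
    apply Continuous.aestronglyMeasurable
    fun_prop
  · refine Filter.Eventually.of_forall fun ξ => ?_
    rw [Finset.prod_mul_distrib, Finset.prod_mul_distrib, prod_ge, norm_mul, norm_mul _ (Complex.exp _)]
    gcongr
    rw [Complex.norm_exp_ofReal, Complex.norm_exp_ofReal]
    apply Real.exp_le_exp.2
    linarith [hS ξ]

lemma Q_lin {d : ℕ} (S S' : Fin d → Fin d → ℝ) (u t : ℝ) (ξ : Fin d → ℝ) :
    Q (fun j k => u * S j k + t * (S' j k - S j k)) ξ = u * Q S ξ + t * (Q S' ξ - Q S ξ) := by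
  simp only [Q]
  rw [← Finset.sum_sub_distrib, Finset.mul_sum, Finset.mul_sum, ← Finset.sum_add_distrib]
  apply Finset.sum_congr rfl; intro j _
  rw [← Finset.sum_sub_distrib, Finset.mul_sum, Finset.mul_sum, ← Finset.sum_add_distrib]
  apply Finset.sum_congr rfl; intro k _
  ring

lemma Q_lower {d : ℕ} {S S' : Fin d → Fin d → ℝ} {σ δ t : ℝ}  (ht0 : 0 ≤ t) (ht1 : t ≤ 1)
    (hδ : 0 < δ)
    (hS : ∀ x, σ ^ 2 * ∑ l, x l ^ 2 ≤ Q S x) (hS' : ∀ x, 0 ≤ Q S' x) (ξ : Fin d → ℝ) :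
    (1 - t + δ) * σ ^ 2 * ∑ l, ξ l ^ 2 ≤ Q (fun j k => (1 + δ) * S j k + t * (S' j k - S j k)) ξ := by
  rw [Q_lin]
  have h1 := hS ξ
  have h2 := hS' ξ
  nlinarith [mul_nonneg ht0 h2, mul_le_mul_of_nonneg_left h1 (show 0 ≤ 1 - t + δ by linarith)]

lemma exp_diff (A B : ℝ) : Complex.exp (((-(A + (B - A)) / 2 : ℝ)) : ℂ) - Complex.exp (((-A / 2 : ℝ)) : ℂ)
    = ∫ t in (0:ℝ)..1, ((-(B - A) / 2 : ℝ) : ℂ) * Complex.exp (((-(A + t * (B - A)) / 2 : ℝ)) : ℂ) := by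
  have h : ∀ t ∈ Set.uIcc (0:ℝ) 1, HasDerivAt (fun t : ℝ => Complex.exp (((-(A + t * (B - A)) / 2 : ℝ)) : ℂ))
      (((-(B - A) / 2 : ℝ) : ℂ) * Complex.exp (((-(A + t * (B - A)) / 2 : ℝ)) : ℂ)) t := by
    intro t _
    have h0 : HasDerivAt (fun t : ℝ => -(A + t * (B - A)) / 2) (-(B - A) / 2) t := by
      have := ((((hasDerivAt_id t).mul_const (B - A)).const_add A).neg).div_const 2
      simpa using this
    have := h0.ofReal_comp.cexp
    rw [mul_comm]
    exact this
  rw [intervalIntegral.integral_eq_sub_of_hasDerivAt h]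
  · simp
  · apply Continuous.intervalIntegrable; fun_prop

lemma Qdiff {d : ℕ} (S S' : Fin d → Fin d → ℝ) (ξ : Fin d → ℝ) :
    (((-(Q S' ξ - Q S ξ) / 2 : ℝ)) : ℂ) = ∑ j, ∑ k, ((S' j k - S j k) / 2 : ℝ) *
      ∏ l, ((ξ l : ℂ) * Complex.I) ^ (mm j k l) := by
  simp_rw [prod_mm]
  simp only [Q]
  rw [← Finset.sum_sub_distrib, neg_div, Finset.sum_div, ← Finset.sum_neg_distrib, Complex.ofReal_sum]
  apply Finset.sum_congr rfl; intro j _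
  rw [← Finset.sum_sub_distrib, Finset.sum_div, ← Finset.sum_neg_distrib, Complex.ofReal_sum]
  apply Finset.sum_congr rfl; intro k _
  push_cast
  linear_combination (-(ξ j : ℂ) * ξ k * (S' j k - S j k) / 2) * Complex.I_sq

/-- integrand in `t` -/
noncomputable def GG {d : ℕ} (S S' : Fin d → Fin d → ℝ) (δ : ℝ) (a b : Fin d → ℝ) (t : ℝ) (ξ : Fin d → ℝ) : ℂ :=
  (((-(Q S' ξ - Q S ξ) / 2 : ℝ)) : ℂ) * (∏ l, psi (a l) (b l) (ξ l)) *
    Complex.exp (((-(Q (fun j k => (1 + δ) * S j k + t * (S' j k - S j k)) ξ) / 2 : ℝ)) : ℂ)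

lemma GG_eq {d : ℕ} (S S' P : Fin d → Fin d → ℝ) (a b : Fin d → ℝ) (ξ : Fin d → ℝ) :
    (((-(Q S' ξ - Q S ξ) / 2 : ℝ)) : ℂ) * (∏ l, psi (a l) (b l) (ξ l)) *
    Complex.exp (((-(Q P ξ) / 2 : ℝ)) : ℂ)
    = ∑ j, ∑ k, ((S' j k - S j k) / 2 : ℝ) * ((∏ l, ((ξ l : ℂ) * Complex.I) ^ (mm j k l)) *
      (∏ l, psi (a l) (b l) (ξ l)) *
    Complex.exp (((-(Q P ξ) / 2 : ℝ)) : ℂ)) := by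
  rw [Qdiff, Finset.sum_mul, Finset.sum_mul]
  apply Finset.sum_congr rfl; intro j _
  rw [Finset.sum_mul, Finset.sum_mul]
  apply Finset.sum_congr rfl; intro k _
  ring

lemma GG_integrable {d : ℕ} (S S' P : Fin d → Fin d → ℝ) {c : ℝ} (hc : 0 < c)
    (hS : ∀ ξ, c ^ 2 * ∑ l, ξ l ^ 2 ≤ Q P ξ) (a b : Fin d → ℝ) :
    Integrable (fun ξ : Fin d → ℝ => (((-(Q S' ξ - Q S ξ) / 2 : ℝ)) : ℂ) * (∏ l, psi (a l) (b l) (ξ l)) *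
    Complex.exp (((-(Q P ξ) / 2 : ℝ)) : ℂ)) := by
  simp_rw [GG_eq]
  exact integrable_finsetSum _ fun j _ => integrable_finsetSum _ fun k _ =>
    (integ_term hc hS a b _).const_mul _

lemma KK_meas (τ a b : ℝ) (m : ℕ) : Measurable (fun y => KK τ a b y m) := by
  have hp : Measurable (gaussianPDFReal 0 1) := measurable_gaussianPDFReal 0 1
  match m with
  | 0 =>
    simp only [KK]
    have hs : MeasurableSet {z : ℝ × ℝ | (a - z.1) / τ < z.2 ∧ z.2 ≤ (b - z.1) / τ} := by
      apply MeasurableSet.inter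
      · exact measurableSet_lt (f := fun z : ℝ × ℝ => (a - z.1) / τ) (g := fun z => z.2) (by fun_prop) (by fun_prop)
      · exact measurableSet_le (f := fun z : ℝ × ℝ => z.2) (g := fun z => (b - z.1) / τ) (by fun_prop) (by fun_prop)
    exact (measurable_measure_prodMk_left (ν := gaussianReal 0 1) hs).ennreal_toReal
  | 1 => simp only [KK]; fun_prop
  | (n + 2) => simp only [KK]; fun_prop

lemma GG_bound {d : ℕ} (hd : 3 ≤ d) {S S' : Fin d → Fin d → ℝ} {σ δ t D : ℝ}  (ht0 : 0 ≤ t) (ht1 : t ≤ 1)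
    (hσ : 0 < σ) (hδ : 0 < δ) (hsy : ∀ j k, S j k = S k j) (hsy' : ∀ j k, S' j k = S' k j)
    (hS : ∀ x, σ ^ 2 * ∑ l, x l ^ 2 ≤ Q S x) (hS' : ∀ x, 0 ≤ Q S' x)
    (hD : ∀ j k, |S j k - S' j k| ≤ D) (a b : Fin d → ℝ) (hab : ∀ j, a j ≤ b j) :
    ‖∫ ξ, GG S S' δ a b t ξ‖ ≤ (2 * Real.pi) ^ d * (9 * D * LL d ^ 2 / σ ^ 2 * (1 - t + δ)⁻¹) := by
  set P : Fin d → Fin d → ℝ := fun j k => (1 + δ) * S j k + t * (S' j k - S j k) with hP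
  have hu : 0 < 1 - t + δ := by linarith
  set τ := √(1 - t + δ) * σ with hτd
  have hτ : 0 < τ := by positivity
  have hτ2 : τ ^ 2 = (1 - t + δ) * σ ^ 2 := by rw [hτd, mul_pow, Real.sq_sqrt hu.le]
  set T : Fin d → Fin d → ℝ := fun j k => P j k - τ ^ 2 * (if j = k then 1 else 0) with hT
  have hPT : ∀ j k, P j k = T j k + τ ^ 2 * (if j = k then 1 else 0) := by intro j k; simp [hT]
  have hlow : ∀ ξ, τ ^ 2 * ∑ l, ξ l ^ 2 ≤ Q P ξ := by
    intro ξ; rw [hτ2]; exact Q_lower ht0 ht1 hδ hS hS' ξ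
  obtain ⟨ν, hν⟩ := exists_isG T (by
      intro j k
      simp only [hT, hP, hsy j k, hsy' j k, eq_comm (a := j) (b := k)])
    (by intro ξ
        have h1 := QS hPT ξ
        linarith [hlow ξ])
  have := hν.1
  have hf := fun j k => fourier_gen hν hτ hPT a b hab (mm j k) (mm_le j k)
  have hI : ∀ j k, Integrable (fun y : Fin d → ℝ => ∏ l, KK τ (a l) (b l) (y l) (mm j k l)) ν := by
    intro j k
    have hb : ∀ y : Fin d → ℝ, |∏ l, KK τ (a l) (b l) (y l) (mm j k l)| ≤ 18 * LL d ^ 2 / τ ^ 2 := by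
      intro y
      refine le_trans ?_ (sum_KK hd hτ a b y)
      refine le_trans ?_ (Finset.single_le_sum (f := fun j => ∑ k, |∏ l, KK τ (a l) (b l) (y l) (mm j k l)|)
        (fun i _ => Finset.sum_nonneg fun _ _ => abs_nonneg _) (Finset.mem_univ j))
      exact Finset.single_le_sum (f := fun k => |∏ l, KK τ (a l) (b l) (y l) (mm j k l)|)
        (fun i _ => abs_nonneg _) (Finset.mem_univ k)
    refine Integrable.of_bound ?_ _ (Filter.Eventually.of_forall hb)
    apply Measurable.aestronglyMeasurable
    exact Finset.measurable_prod _ fun l _ => (KK_meas τ (a l) (b l) (mm j k l)).comp (measurable_pi_apply l)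
  have hD0 : 0 ≤ D := (abs_nonneg _).trans (hD ⟨0, by omega⟩ ⟨0, by omega⟩)
  simp only [GG]
  simp_rw [GG_eq]
  rw [integral_finsetSum _ fun j _ => integrable_finsetSum _ fun k _ =>
    (integ_term hτ hlow a b _).const_mul _]
  simp_rw [fun j => integral_finsetSum Finset.univ (fun k _ =>
    (integ_term hτ hlow a b (mm j k)).const_mul ((((S' j k - S j k) / 2 : ℝ)) : ℂ)), integral_const_mul]
  simp_rw [hf]
  simp only [← Complex.ofReal_mul, ← Complex.ofReal_sum]
  rw [Complex.norm_real, Real.norm_eq_abs]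
  calc |∑ j, ∑ k, (S' j k - S j k) / 2 * ((2 * Real.pi) ^ d * ∫ y, ∏ l, KK τ (a l) (b l) (y l) (mm j k l) ∂ν)|
      ≤ ∑ j, ∑ k, D / 2 * ((2 * Real.pi) ^ d * ∫ y, |∏ l, KK τ (a l) (b l) (y l) (mm j k l)| ∂ν) := by
        refine (Finset.abs_sum_le_sum_abs _ _).trans (Finset.sum_le_sum fun j _ => ?_)
        refine (Finset.abs_sum_le_sum_abs _ _).trans (Finset.sum_le_sum fun k _ => ?_)
        rw [abs_mul, abs_mul, abs_div, abs_of_pos (show (0:ℝ) < 2 by norm_num), 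
          abs_of_pos (show 0 < (2 * Real.pi) ^ d by positivity), abs_sub_comm]
        have := abs_integral_le_integral_abs (μ := ν) (f := fun y : Fin d → ℝ => ∏ l, KK τ (a l) (b l) (y l) (mm j k l))
        have := hD j k
        gcongr
    _ = D / 2 * (2 * Real.pi) ^ d * ∫ y, ∑ j, ∑ k, |∏ l, KK τ (a l) (b l) (y l) (mm j k l)| ∂ν := by
        rw [integral_finsetSum _ fun j _ => integrable_finsetSum _ fun k _ => (hI j k).abs, Finset.mul_sum]
        apply Finset.sum_congr rfl; intro j _
        rw [integral_finsetSum _ fun k _ => (hI j k).abs, Finset.mul_sum]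
        apply Finset.sum_congr rfl; intro k _
        ring
    _ ≤ D / 2 * (2 * Real.pi) ^ d * (18 * LL d ^ 2 / τ ^ 2) := by
        gcongr
        have h1 := integral_mono (μ := ν) (integrable_finsetSum _ fun j _ => integrable_finsetSum _ fun k _ => (hI j k).abs)
          (integrable_const (18 * LL d ^ 2 / τ ^ 2)) (fun y => sum_KK hd hτ a b y)
        simpa using h1
    _ = _ := by
        rw [hτ2]; field_simp; ring

lemma main_fourier {d : ℕ} (hd : 3 ≤ d) {S S' : Fin d → Fin d → ℝ} {σ δ D : ℝ}
    (hσ : 0 < σ) (hδ : 0 < δ) (hsy : ∀ j k, S j k = S k j) (hsy' : ∀ j k, S' j k = S' k j)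
    (hS : ∀ x, σ ^ 2 * ∑ l, x l ^ 2 ≤ Q S x) (hS' : ∀ x, 0 ≤ Q S' x)
    (hD : ∀ j k, |S j k - S' j k| ≤ D) (a b : Fin d → ℝ) (hab : ∀ j, a j ≤ b j)
    {ν₀ ν₁ : Measure (Fin d → ℝ)} (h₀ : IsG ν₀ (fun j k => (1 + δ) * S j k))
    (h₁ : IsG ν₁ (fun j k => S' j k + δ * S j k)) :
    |ν₁.real {x | ∀ j, a j < x j ∧ x j ≤ b j} - ν₀.real {x | ∀ j, a j < x j ∧ x j ≤ b j}|
      ≤ 9 * D * LL d ^ 2 / σ ^ 2 * Real.log ((1 + δ) / δ) := by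
  set A := {x : Fin d → ℝ | ∀ j, a j < x j ∧ x j ≤ b j} with hA
  set P : ℝ → Fin d → Fin d → ℝ := fun t j k => (1 + δ) * S j k + t * (S' j k - S j k) with hP
  set c := √δ * σ with hcd
  have hc : 0 < c := by positivity
  have hc2 : c ^ 2 = δ * σ ^ 2 := by rw [hcd, mul_pow, Real.sq_sqrt hδ.le]
  have hlow : ∀ t, 0 ≤ t → t ≤ 1 → ∀ ξ, c ^ 2 * ∑ l, ξ l ^ 2 ≤ Q (P t) ξ := by
    intro t h0 h1 ξ; rw [hc2]
    refine le_trans ?_ (Q_lower h0 h1 hδ hS hS' ξ)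
    have : 0 ≤ ∑ l, ξ l ^ 2 := Finset.sum_nonneg fun _ _ => sq_nonneg _
    gcongr
    linarith
  have pr : ∀ t, 0 ≤ t → t ≤ 1 → ∀ ν : Measure (Fin d → ℝ), IsG ν (P t) →
      (((2 * Real.pi) ^ d * ν.real A : ℝ) : ℂ) = ∫ ξ : Fin d → ℝ, (∏ l, psi (a l) (b l) (ξ l)) *
        Complex.exp (((-(Q (P t) ξ) / 2 : ℝ)) : ℂ) := by
    intro t h0 h1 ν hν
    set T : Fin d → Fin d → ℝ := fun j k => P t j k - c ^ 2 * (if j = k then 1 else 0) with hT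
    have hPT : ∀ j k, P t j k = T j k + c ^ 2 * (if j = k then 1 else 0) := by intro j k; simp [hT]
    obtain ⟨ν', hν'⟩ := exists_isG T (by
      intro j k
      simp only [hT, hP, hsy j k, hsy' j k, eq_comm (a := j) (b := k)])
     (by intro ξ
         have h2 := QS hPT ξ
         linarith [hlow t h0 h1 ξ])
    have h3 := fourier_gen hν' hc hPT a b hab (fun _ => 0) (fun _ => by norm_num)
    rw [smooth_prob hν hν' hc hPT a b, ← h3]
    simp
  have p0 := pr 0 le_rfl zero_le_one ν₀ (by
    convert h₀ using 1; ext j k; simp [hP])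
  have p1 := pr 1 zero_le_one le_rfl ν₁ (by
    convert h₁ using 1; ext j k; simp only [hP]; ring)
  have ig : ∀ t, 0 ≤ t → t ≤ 1 → Integrable (fun ξ : Fin d → ℝ => (∏ l, psi (a l) (b l) (ξ l)) *
        Complex.exp (((-(Q (P t) ξ) / 2 : ℝ)) : ℂ)) := by
    intro t h0 h1
    have := integ_term hc (hlow t h0 h1) a b (fun _ => 0)
    simpa using this
  have key : (((2 * Real.pi) ^ d * (ν₁.real A - ν₀.real A) : ℝ) : ℂ) = ∫ t in (0:ℝ)..1, ∫ ξ, GG S S' δ a b t ξ := by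
    rw [intervalIntegral_integral_swap]
    · rw [mul_sub, Complex.ofReal_sub, p1, p0, ← integral_sub (ig 1 zero_le_one le_rfl) (ig 0 le_rfl zero_le_one)]
      congr 1
      ext ξ
      rw [← mul_sub]
      have h1 := exp_diff ((1 + δ) * Q S ξ) ((1 + δ) * Q S ξ + (Q S' ξ - Q S ξ))
      simp only [GG, hP, Q_lin]
      rw [add_sub_cancel_left] at h1
      rw [one_mul, zero_mul, add_zero, h1, ← intervalIntegral.integral_const_mul]
      congr 1
      ext t
      ring
    · have i0 := (GG_integrable S S' (fun j k => c ^ 2 * (if j = k then 1 else 0)) hc (fun ξ => by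
        rw [QS (T := fun _ _ => 0) (c := c ^ 2) (by simp)]
        simp [Q]) a b)
      have hfin : IsFiniteMeasure (volume.restrict (Set.uIoc (0:ℝ) 1)) := by
        rw [Set.uIoc_of_le zero_le_one]; infer_instance
      have i1 := Integrable.mul_prod (f := fun _ : ℝ => (1:ℝ)) (μ := volume.restrict (Set.uIoc (0:ℝ) 1))
        (integrable_const _) i0.norm
      refine i1.mono' ?_ ?_
      · have h2 := Q_cont S
        have h2' := Q_cont S'
        have h3 := fun l => psi_cont (a l) (b l)
        apply Continuous.aestronglyMeasurable
        simp only [Function.uncurry_def, GG, Q_lin]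
        fun_prop
      · have : (volume.restrict (Set.uIoc (0:ℝ) 1)).prod (volume : Measure (Fin d → ℝ)) =
          (volume.prod volume).restrict (Set.uIoc (0:ℝ) 1 ×ˢ Set.univ) := by
          rw [← Measure.prod_restrict, Measure.restrict_univ]
        rw [this]
        apply ae_restrict_of_forall_mem (measurableSet_uIoc.prod MeasurableSet.univ)
        rintro ⟨t, ξ⟩ ⟨ht, -⟩
        rw [Set.uIoc_of_le zero_le_one] at ht
        simp only [Function.uncurry_def, GG, one_mul]
        rw [norm_mul, norm_mul _ (Complex.exp _)]
        gcongr
        rw [Complex.norm_exp_ofReal, Complex.norm_exp_ofReal]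
        apply Real.exp_le_exp.2
        have := hlow t ht.1.le ht.2 ξ
        rw [QS (S := fun j k => c ^ 2 * (if j = k then 1 else 0)) (T := fun _ _ => 0) (c := c ^ 2) (by simp)]
        have e : Q (fun _ _ => 0) ξ = 0 := by simp [Q]
        rw [e]
        simp only [hP] at this
        linarith
  have hb : ‖∫ t in (0:ℝ)..1, ∫ ξ, GG S S' δ a b t ξ‖ ≤ 
      ∫ t in (0:ℝ)..1, (2 * Real.pi) ^ d * (9 * D * LL d ^ 2 / σ ^ 2 * (1 - t + δ)⁻¹) := by
    apply intervalIntegral.norm_integral_le_of_norm_le zero_le_one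
    · refine Filter.Eventually.of_forall fun t ht => ?_
      exact GG_bound hd ht.1.le ht.2 hσ hδ hsy hsy' hS hS' hD a b hab
    · apply ContinuousOn.intervalIntegrable
      rw [Set.uIcc_of_le zero_le_one]
      have : ContinuousOn (fun t : ℝ => (1 - t + δ)⁻¹) (Set.Icc 0 1) := by
        apply ContinuousOn.inv₀ (by fun_prop)
        intro t ht; linarith [ht.2]
      fun_prop
  have hlog : ∫ t in (0:ℝ)..1, (1 - t + δ)⁻¹ = Real.log ((1 + δ) / δ) := by
    have h1 := intervalIntegral.integral_comp_sub_left (a := 0) (b := 1) (fun x : ℝ => x⁻¹) (1 + δ)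
    rw [show (fun t : ℝ => (1 - t + δ)⁻¹) = fun t => (1 + δ - t)⁻¹ by ext t; congr 1; ring, h1,
      integral_inv_of_pos (by linarith) (by linarith)]
    congr 2 <;> ring
  rw [intervalIntegral.integral_const_mul, intervalIntegral.integral_const_mul, hlog, ← key, Complex.norm_real,
    Real.norm_eq_abs, abs_mul, abs_of_pos (show 0 < (2 * Real.pi) ^ d by positivity)] at hb
  exact le_of_mul_le_mul_left hb (by positivity)

end GC


namespace GC

/-- the gluing map in the conditional decomposition -/
def gl {d : ℕ} (S : Fin d → Fin d → ℝ) (j : Fin d) (z : ℝ × (Fin d → ℝ)) : Fin d → ℝ :=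
  fun k => if k = j then z.1 else z.2 k + S k j * z.1

lemma gl_meas {d : ℕ} (S : Fin d → Fin d → ℝ) (j : Fin d) : Measurable (gl S j) := by
  apply measurable_pi_lambda
  intro k
  unfold gl
  by_cases h : k = j
  · simp only [h, if_true]; fun_prop
  · simp only [h, if_false]; fun_prop

/-- argmax cells -/
def Fs {d : ℕ} (b : Fin d → ℝ) (ε : ℝ) (j : Fin d) : Set (Fin d → ℝ) :=
  {x | b j < x j} ∩ {x | x j ≤ b j + ε} ∩ ⋂ k, {x | x k - b k ≤ x j - b j}

lemma Fs_meas {d : ℕ} (b : Fin d → ℝ) (ε : ℝ) (j : Fin d) : MeasurableSet (Fs b ε j) := by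
  refine (MeasurableSet.inter ?_ ?_).inter (MeasurableSet.iInter fun k => ?_)
  · exact measurableSet_lt (f := fun _ : Fin d → ℝ => b j) (g := fun x => x j) (by fun_prop) (by fun_prop)
  · exact measurableSet_le (f := fun x : Fin d → ℝ => x j) (g := fun _ => b j + ε) (by fun_prop) (by fun_prop)
  · exact measurableSet_le (f := fun x : Fin d → ℝ => x k - b k) (g := fun x => x j - b j) (by fun_prop) (by fun_prop)

/-- residual cells -/
def Rs {d : ℕ} (S : Fin d → Fin d → ℝ) (b : Fin d → ℝ) (j : Fin d) (t : ℝ) : Set (Fin d → ℝ) :=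
  ⋂ k, {r | k ≠ j → r k ≤ b k + t - S k j * (b j + t)}

lemma Rs_meas {d : ℕ} (S : Fin d → Fin d → ℝ) (b : Fin d → ℝ) (j : Fin d) (t : ℝ) :
    MeasurableSet (Rs S b j t) := by
  refine MeasurableSet.iInter fun k => ?_
  by_cases h : k = j
  · simp [h]
  · simp only [ne_eq, h, not_false_eq_true, true_implies]
    exact measurableSet_le (f := fun x : Fin d → ℝ => x k) (g := fun _ => b k + t - S k j * (b j + t))
      (by fun_prop) (by fun_prop)

/-- disjoint exceedance cells -/
def Es {d : ℕ} (S : Fin d → Fin d → ℝ) (b : Fin d → ℝ) (t : ℝ) (j : Fin d) : Set (Fin d → ℝ) :=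
  {x | b j + t < x j} ∩ ⋂ k, {x | k ≠ j → x k - S k j * x j ≤ b k + t - S k j * (b j + t)}

lemma Es_meas {d : ℕ} (S : Fin d → Fin d → ℝ) (b : Fin d → ℝ) (t : ℝ) (j : Fin d) :
    MeasurableSet (Es S b t j) := by
  refine MeasurableSet.inter ?_ (MeasurableSet.iInter fun k => ?_)
  · exact measurableSet_lt (f := fun _ : Fin d → ℝ => b j + t) (g := fun x => x j) (by fun_prop) (by fun_prop)
  by_cases h : k = j
  · simp [h]
  · simp only [ne_eq, h, not_false_eq_true, true_implies]
    exact measurableSet_le (f := fun x : Fin d → ℝ => x k - S k j * x j) (g := fun _ => b k + t - S k j * (b j + t))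
      (by fun_prop) (by fun_prop)

lemma Es_disj {d : ℕ} {S : Fin d → Fin d → ℝ} (hsymm : ∀ j k, S j k = S k j)
    (hoff : ∀ j k, j ≠ k → S j k < 1) (b : Fin d → ℝ) (t : ℝ) :
    Pairwise (Function.onFun Disjoint (Es S b t)) := by
  intro j k hjk
  rw [Function.onFun, Set.disjoint_left]
  rintro x ⟨h1, h2⟩ ⟨h3, h4⟩
  have h5 := (Set.mem_iInter.1 h2 k) hjk.symm
  have h6 := (Set.mem_iInter.1 h4 j) hjk
  have h7 := hoff j k hjk
  rw [hsymm k j] at h5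
  have h1' : 0 < x j - (b j + t) := by have : b j + t < x j := h1; linarith
  have h3' : 0 < x k - (b k + t) := by have : b k + t < x k := h3; linarith
  have h5' : x k - (b k + t) ≤ S j k * (x j - (b j + t)) := by linarith
  have h6' : x j - (b j + t) ≤ S j k * (x k - (b k + t)) := by linarith
  nlinarith

open Finset in
lemma nazarov_pt {d : ℕ} (hd : 3 ≤ d) {ν : Measure (Fin d → ℝ)} {S : Fin d → Fin d → ℝ}
    (h : IsG ν S) (hsymm : ∀ j k, S j k = S k j)
    (hoff : ∀ j k, j ≠ k → S j k < 1) (b : Fin d → ℝ) (ρ : Fin d → Measure (Fin d → ℝ))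
    (hρ : ∀ j, IsProbabilityMeasure (ρ j))
    (hν : ∀ j, ν = ((gaussianReal 0 1).prod (ρ j)).map (gl S j)) (t : ℝ) :
    ∑ j, gaussianPDFReal 0 1 (b j + t) * (ρ j).real (Rs S b j t) ≤ LL d + 1 := by
  have := h.1
  have hE : ∀ j, ν.real (Es S b t j) = (gaussianReal 0 1).real (Set.Ioi (b j + t)) * (ρ j).real (Rs S b j t) := by
    intro j
    have e : gl S j ⁻¹' (Es S b t j) = Set.Ioi (b j + t) ×ˢ Rs S b j t := by
      ext ⟨g, r⟩
      simp only [gl, Es, Rs, Set.mem_preimage, Set.mem_inter_iff, Set.mem_ofPred_eq, Set.mem_iInter, if_true,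
        Set.mem_prod, Set.mem_Ioi]
      refine and_congr Iff.rfl (forall_congr' fun k => ?_)
      by_cases hk : k = j
      · simp [hk]
      · simp [hk]
    have hp := hρ j
    rw [Measure.real, hν j, Measure.map_apply (gl_meas S j) (Es_meas S b t j), e, Measure.prod_prod, ENNReal.toReal_mul]
    rfl
  have hsum : ∑ j, ν.real (Es S b t j) ≤ 1 := by
    have h1 := measureReal_iUnion_fintype (μ := ν) (Es_disj hsymm hoff b t) (Es_meas S b t)
    rw [← h1]
    exact measureReal_le_one
  have hd0 : (0:ℝ) < d := by positivity
  have hLL : 0 ≤ LL d := by unfold LL; positivity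
  calc ∑ j, gaussianPDFReal 0 1 (b j + t) * (ρ j).real (Rs S b j t)
      ≤ ∑ j, (LL d * ν.real (Es S b t j) + 1 / d) := by
        apply sum_le_sum; intro j _
        have hp := hρ j
        have h1 := (mills_L hd (b j + t) _ measureReal_nonneg (mills_Ioi (b j + t))).1
        have h2 : (ρ j).real (Rs S b j t) ≤ 1 := measureReal_le_one
        have h3 : 0 ≤ (ρ j).real (Rs S b j t) := measureReal_nonneg
        have h4 : 0 ≤ 1 / (d:ℝ) := by positivity
        rw [hE]
        nlinarith [mul_le_mul_of_nonneg_right h1 h3, mul_le_mul_of_nonneg_left h2 h4]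
    _ = LL d * ∑ j, ν.real (Es S b t j) + 1 := by
        rw [sum_add_distrib, mul_sum]; simp; field_simp
    _ ≤ LL d + 1 := by nlinarith

open Finset in
lemma nazarov {d : ℕ} (hd : 3 ≤ d) {ν : Measure (Fin d → ℝ)} {S : Fin d → Fin d → ℝ}
    (h : IsG ν S) (hsymm : ∀ j k, S j k = S k j) (hpos : ∀ x, 0 ≤ Q S x) (hdiag : ∀ j, S j j = 1)
    (hoff : ∀ j k, j ≠ k → S j k < 1) (b : Fin d → ℝ) {ε : ℝ} (hε : 0 ≤ ε) :
    ν.real {x | (∃ j, b j < x j) ∧ ∀ k, x k ≤ b k + ε} ≤ (LL d + 1) * ε := by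
  have := h.1
  have hLL : 0 ≤ LL d := by unfold LL; positivity
  choose ρ hρ hν using fun j => h.decomp hsymm hpos j (hdiag j)
  have hsub : {x | (∃ j, b j < x j) ∧ ∀ k, x k ≤ b k + ε} ⊆ ⋃ j, Fs b ε j := by
    rintro x ⟨⟨j0, hj0⟩, hx⟩
    obtain ⟨j, -, hj⟩ := exists_max_image univ (fun k => x k - b k) ⟨j0, mem_univ _⟩
    rw [Set.mem_iUnion]
    refine ⟨j, ⟨?_, hx j⟩, Set.mem_iInter.2 fun k => hj k (mem_univ _)⟩
    have := hj j0 (mem_univ _)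
    show b j < x j
    linarith
  have hF : ∀ j, ν (Fs b ε j) = ∫⁻ t, (Set.Ioc 0 ε).indicator 
      (fun t => ENNReal.ofReal (gaussianPDFReal 0 1 (b j + t) * (ρ j).real (Rs S b j t))) t := by
    intro j
    have hp := hρ j
    have hm : MeasurableSet (gl S j ⁻¹' Fs b ε j) := gl_meas S j (Fs_meas b ε j)
    have e1 : ν (Fs b ε j) = ((gaussianReal 0 1).prod (ρ j)) (gl S j ⁻¹' Fs b ε j) := by
      conv_lhs => rw [hν j]
      exact Measure.map_apply (gl_meas S j) (Fs_meas b ε j)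
    rw [e1, Measure.prod_apply hm, gaussianReal_of_var_ne_zero _ one_ne_zero,
      lintegral_withDensity_eq_lintegral_mul _ (measurable_gaussianPDF 0 1) (measurable_measure_prodMk_left hm),
      ← lintegral_add_left_eq_self _ (b j)]
    congr 1
    ext t
    simp only [Pi.mul_apply]
    by_cases ht : t ∈ Set.Ioc 0 ε
    · rw [Set.indicator_of_mem ht]
      have e : Prod.mk (b j + t) ⁻¹' (gl S j ⁻¹' Fs b ε j) = Rs S b j t := by
        ext r
        simp only [gl, Fs, Rs, Set.mem_preimage, Set.mem_inter_iff, Set.mem_ofPred_eq, Set.mem_iInter, if_true]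
        constructor
        · rintro ⟨-, h2⟩ k hk
          have := h2 k
          rw [if_neg hk] at this
          linarith
        · intro h2
          refine ⟨⟨by linarith [ht.1], by linarith [ht.2]⟩, fun k => ?_⟩
          by_cases hk : k = j
          · simp [hk]
          · rw [if_neg hk]
            have := h2 k hk
            linarith
      rw [e, ENNReal.ofReal_mul (gaussianPDFReal_nonneg _ _ _), gaussianPDF, ofReal_measureReal]
    · rw [Set.indicator_of_notMem ht]
      have e : Prod.mk (b j + t) ⁻¹' (gl S j ⁻¹' Fs b ε j) = ∅ := by
        ext r
        simp only [gl, Fs, Set.mem_preimage, Set.mem_inter_iff, Set.mem_ofPred_eq, Set.mem_iInter, if_true,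
          Set.mem_empty_iff_false, iff_false]
        rintro ⟨⟨h1, h2⟩, -⟩
        exact ht ⟨by linarith, by linarith⟩
      rw [e]; simp
  have hmeas : ∀ j, Measurable (fun t => (Set.Ioc 0 ε).indicator 
      (fun t => ENNReal.ofReal (gaussianPDFReal 0 1 (b j + t) * (ρ j).real (Rs S b j t))) t) := by
    intro j
    have hp := hρ j
    have hs : MeasurableSet {z : ℝ × (Fin d → ℝ) | z.2 ∈ Rs S b j z.1} := by
      have : {z : ℝ × (Fin d → ℝ) | z.2 ∈ Rs S b j z.1} =
          ⋂ k, {z | k ≠ j → z.2 k ≤ b k + z.1 - S k j * (b j + z.1)} := by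
        ext z; simp [Rs]
      rw [this]
      refine MeasurableSet.iInter fun k => ?_
      by_cases h : k = j
      · simp [h]
      · simp only [ne_eq, h, not_false_eq_true, true_implies]
        exact measurableSet_le (f := fun z : ℝ × (Fin d → ℝ) => z.2 k) (g := fun z => b k + z.1 - S k j * (b j + z.1))
          (by fun_prop) (by fun_prop)
    have h1 : Measurable (fun t => (ρ j).real (Rs S b j t)) :=
      (measurable_measure_prodMk_left (ν := ρ j) hs).ennreal_toReal
    have h2 := measurable_gaussianPDFReal 0 1
    apply Measurable.indicator _ measurableSet_Ioc
    fun_prop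
  have hmain : ν (⋃ j, Fs b ε j) ≤ ENNReal.ofReal ((LL d + 1) * ε) := by
    calc ν (⋃ j, Fs b ε j) ≤ ∑ j, ν (Fs b ε j) := measure_iUnion_fintype_le _ _
      _ = ∫⁻ t, ∑ j, (Set.Ioc 0 ε).indicator
          (fun t => ENNReal.ofReal (gaussianPDFReal 0 1 (b j + t) * (ρ j).real (Rs S b j t))) t := by
          rw [lintegral_finsetSum _ fun j _ => hmeas j]
          exact sum_congr rfl fun j _ => hF j
      _ ≤ ∫⁻ t, (Set.Ioc 0 ε).indicator (fun _ => ENNReal.ofReal (LL d + 1)) t := by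
          apply lintegral_mono
          intro t
          by_cases ht : t ∈ Set.Ioc 0 ε
          · simp only [Set.indicator_of_mem ht]
            rw [← ENNReal.ofReal_sum_of_nonneg fun j _ => mul_nonneg (gaussianPDFReal_nonneg _ _ _) measureReal_nonneg]
            exact ENNReal.ofReal_le_ofReal (nazarov_pt hd h hsymm hoff b ρ hρ hν t)
          · simp [Set.indicator_of_notMem ht]
      _ = ENNReal.ofReal ((LL d + 1) * ε) := by
          rw [lintegral_indicator measurableSet_Ioc, setLIntegral_const, Real.volume_Ioc, sub_zero,
            ENNReal.ofReal_mul (by linarith)]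
  rw [Measure.real]
  refine ENNReal.toReal_le_of_le_ofReal (by positivity) ((measure_mono hsub).trans hmain)

end GC


namespace GC

/-- rectangles -/
def rect {d : ℕ} (a b : Fin d → ℝ) : Set (Fin d → ℝ) := {x | ∀ j, a j < x j ∧ x j ≤ b j}

lemma rect_meas {d : ℕ} (a b : Fin d → ℝ) : MeasurableSet (rect a b) := by
  have : rect a b = Set.univ.pi (fun j => Set.Ioc (a j) (b j)) := by
    ext x; simp [rect, Set.mem_pi]
  rw [this]; exact MeasurableSet.univ_pi fun j => measurableSet_Ioc

lemma shell {d : ℕ} (hd : 3 ≤ d) {ν : Measure (Fin d → ℝ)} {S : Fin d → Fin d → ℝ}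
    (h : IsG ν S) (hsymm : ∀ j k, S j k = S k j) (hpos : ∀ x, 0 ≤ Q S x) (hdiag : ∀ j, S j j = 1)
    (hoff : ∀ j k, j ≠ k → S j k < 1) (a b : Fin d → ℝ) {ε : ℝ} (hε : 0 < ε) :
    ν.real (rect (fun j => a j - ε) (fun j => b j + ε)) ≤ ν.real (rect a b) + 3 * (LL d + 1) * ε := by
  have := h.1
  have hn := (h.smul (-1))
  have hS : (fun j k => (-1:ℝ) ^ 2 * S j k) = S := by ext j k; simp
  rw [hS] at hn
  have hmap := hn.unique h
  have n1 := nazarov hd h hsymm hpos hdiag hoff b hε.le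
  have n2 := nazarov hd h hsymm hpos hdiag hoff (fun j => - a j - ε) (show 0 ≤ 2 * ε by linarith)
  set N1 := {x : Fin d → ℝ | (∃ j, b j < x j) ∧ ∀ k, x k ≤ b k + ε}
  set N2 := {x : Fin d → ℝ | (∃ j, - a j - ε < x j) ∧ ∀ k, x k ≤ - a k - ε + 2 * ε} with hN2
  have hN2m : MeasurableSet N2 := by
    have : N2 = (⋃ j, {x | - a j - ε < x j}) ∩ ⋂ k, {x | x k ≤ - a k - ε + 2 * ε} := by
      ext x; simp [N2]
    rw [this]
    refine MeasurableSet.inter (MeasurableSet.iUnion fun j => ?_) (MeasurableSet.iInter fun j => ?_)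
    · exact measurableSet_lt (f := fun _ : Fin d → ℝ => - a j - ε) (g := fun x => x j) (by fun_prop) (by fun_prop)
    · exact measurableSet_le (f := fun x : Fin d → ℝ => x j) (g := fun _ => - a j - ε + 2 * ε) (by fun_prop) (by fun_prop)
  have e2 : ν.real N2 = ν.real ((fun z : Fin d → ℝ => (-1:ℝ) • z) ⁻¹' N2) := by
    conv_lhs => rw [← hmap]
    rw [Measure.real, Measure.map_apply (by fun_prop) hN2m]; rfl
  rw [e2] at n2
  have hsub : rect (fun j => a j - ε) (fun j => b j + ε) ⊆
      rect a b ∪ (N1 ∪ ((fun z : Fin d → ℝ => (-1:ℝ) • z) ⁻¹' N2)) := by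
    intro x hx
    by_cases h1 : ∃ j, b j < x j
    · right; left; exact ⟨h1, fun k => (hx k).2⟩
    by_cases h2 : ∃ j, x j ≤ a j
    · right; right
      obtain ⟨j, hj⟩ := h2
      refine ⟨⟨j, ?_⟩, fun k => ?_⟩
      · simp; linarith
      · have : a k - ε < x k := (hx k).1
        simp; linarith
    · left
      push Not at h1 h2
      exact fun j => ⟨h2 j, h1 j⟩
  have h3 := measureReal_mono (μ := ν) hsub
  have h4 := measureReal_union_le (μ := ν) (rect a b) (N1 ∪ ((fun z : Fin d → ℝ => (-1:ℝ) • z) ⁻¹' N2))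
  have h5 := measureReal_union_le (μ := ν) N1 ((fun z : Fin d → ℝ => (-1:ℝ) • z) ⁻¹' N2)
  linarith

lemma gauss_tail {u : ℝ} (hu : 0 ≤ u) : (gaussianReal 0 1).real {x | u < |x|} ≤ 2 * Real.exp (-u ^ 2 / 2) := by
  have hI : ∀ t, Integrable (fun ω : ℝ => Real.exp (t * id ω)) (gaussianReal 0 1) :=
    fun t => integrable_exp_mul_gaussianReal t
  have h1 := measure_ge_le_exp_mul_mgf (μ := gaussianReal 0 1) (X := id) u hu (hI u)
  have h2 := measure_le_le_exp_mul_mgf (μ := gaussianReal 0 1) (X := id) (t := -u) (-u) (by linarith) (hI (-u))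
  rw [mgf_id_gaussianReal] at h1 h2
  have hsub : {x : ℝ | u < |x|} ⊆ {x | u ≤ id x} ∪ {x | id x ≤ -u} := by
    intro x hx
    have hx' : u < |x| := hx
    rcases lt_abs.1 hx' with h | h
    · left; exact h.le
    · right; show x ≤ -u; linarith
  have h3 := measureReal_mono (μ := gaussianReal 0 1) hsub
  have h4 := measureReal_union_le (μ := gaussianReal 0 1) {x : ℝ | u ≤ id x} {x | id x ≤ -u}
  have e : ∀ v w : ℝ, v + w = -u ^ 2 / 2 → Real.exp v * Real.exp w = Real.exp (-u ^ 2 / 2) := by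
    intro v w h; rw [← Real.exp_add, h]
  simp only [NNReal.coe_one] at h1 h2
  rw [e _ _ (by ring)] at h1 h2
  linarith

lemma tail {d : ℕ} {ν : Measure (Fin d → ℝ)} {S : Fin d → Fin d → ℝ}
    (h : IsG ν S) (hdiag : ∀ j, S j j = 1) {s ε : ℝ} (hs : 0 < s) (hε : 0 < ε) :
    (ν.map (fun z => s • z)).real {w | ∃ j, ε < |w j|} ≤ d * (2 * Real.exp (-(ε / s) ^ 2 / 2)) := by
  have := h.1
  have e0 : {w : Fin d → ℝ | ∃ j, ε < |w j|} = ⋃ j, {w | ε < |w j|} := by ext; simp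
  have hm : ∀ j, MeasurableSet {w : Fin d → ℝ | ε < |w j|} := fun j =>
    measurableSet_lt (f := fun _ : Fin d → ℝ => ε) (g := fun x => |x j|) (by fun_prop) (by fun_prop)
  rw [e0]
  refine (measureReal_iUnion_fintype_le _).trans ?_
  have : ∀ j, (ν.map (fun z => s • z)).real {w : Fin d → ℝ | ε < |w j|} ≤ 2 * Real.exp (-(ε / s) ^ 2 / 2) := by
    intro j
    refine le_trans (le_of_eq ?_) (gauss_tail (u := ε / s) (by positivity))
    rw [← h.marg j (hdiag j), Measure.real, Measure.real, Measure.map_apply (by fun_prop) (hm j),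
      Measure.map_apply (by fun_prop) (measurableSet_lt (f := fun _ : ℝ => ε / s) (g := fun x => |x|) (by fun_prop) (by fun_prop))]
    congr 2
    ext w
    simp only [Set.mem_preimage, Set.mem_ofPred_eq, Pi.smul_apply, smul_eq_mul, abs_mul, abs_of_pos hs, div_lt_iff₀ hs,
      mul_comm]
  refine (Finset.sum_le_sum fun j _ => this j).trans ?_
  simp

lemma tail_meas {d : ℕ} (ε : ℝ) : MeasurableSet {w : Fin d → ℝ | ∃ j, ε < |w j|} := by
  have e0 : {w : Fin d → ℝ | ∃ j, ε < |w j|} = ⋃ j, {w | ε < |w j|} := by ext; simp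
  rw [e0]
  exact MeasurableSet.iUnion fun j =>
    measurableSet_lt (f := fun _ : Fin d → ℝ => ε) (g := fun x => |x j|) (by fun_prop) (by fun_prop)

lemma conv_le {d : ℕ} (ν ω : Measure (Fin d → ℝ)) [IsProbabilityMeasure ν] [IsProbabilityMeasure ω]
    (a b : Fin d → ℝ) (ε : ℝ) :
    ((ν.prod ω).map (fun z => z.1 + z.2)).real (rect a b) ≤
      ν.real (rect (fun j => a j - ε) (fun j => b j + ε)) + ω.real {w | ∃ j, ε < |w j|} := by
  rw [Measure.real, Measure.map_apply (by fun_prop) (rect_meas a b)]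
  have hsub : (fun z : (Fin d → ℝ) × (Fin d → ℝ) => z.1 + z.2) ⁻¹' rect a b ⊆
      (rect (fun j => a j - ε) (fun j => b j + ε)) ×ˢ Set.univ ∪ Set.univ ×ˢ {w | ∃ j, ε < |w j|} := by
    rintro ⟨x, w⟩ hx
    by_cases hw : ∃ j, ε < |w j|
    · right; exact ⟨trivial, hw⟩
    · left
      push Not at hw
      refine ⟨fun j => ?_, trivial⟩
      have h1 := hx j
      have h2 := abs_le.1 (hw j)
      simp only [Pi.add_apply] at h1
      constructor <;> dsimp only <;> linarith
  have h3 := measureReal_mono (μ := ν.prod ω) hsub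
  have h4 := measureReal_union_le (μ := ν.prod ω) ((rect (fun j => a j - ε) (fun j => b j + ε)) ×ˢ Set.univ)
    (Set.univ ×ˢ {w | ∃ j, ε < |w j|})
  rw [measureReal_prod_prod, measureReal_prod_prod] at h4
  simp only [probReal_univ, mul_one, one_mul] at h4
  exact h3.trans h4

lemma le_conv {d : ℕ} (ν ω : Measure (Fin d → ℝ)) [IsProbabilityMeasure ν] [IsProbabilityMeasure ω]
    (a b : Fin d → ℝ) (ε : ℝ) :
    ν.real (rect a b) ≤ ((ν.prod ω).map (fun z => z.1 + z.2)).real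
      (rect (fun j => a j - ε) (fun j => b j + ε)) + ω.real {w | ∃ j, ε < |w j|} := by
  have e0 : ((ν.prod ω).map (fun z => z.1 + z.2)).real (rect (fun j => a j - ε) (fun j => b j + ε)) =
      (ν.prod ω).real ((fun z : (Fin d → ℝ) × (Fin d → ℝ) => z.1 + z.2) ⁻¹'
      (rect (fun j => a j - ε) (fun j => b j + ε))) := by
    rw [Measure.real, Measure.map_apply (by fun_prop) (rect_meas _ _)]; rfl
  rw [e0]
  have hsub : rect a b ×ˢ Set.univ ⊆ (fun z : (Fin d → ℝ) × (Fin d → ℝ) => z.1 + z.2) ⁻¹'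
      (rect (fun j => a j - ε) (fun j => b j + ε)) ∪ Set.univ ×ˢ {w | ∃ j, ε < |w j|} := by
    rintro ⟨x, w⟩ ⟨hx, -⟩
    by_cases hw : ∃ j, ε < |w j|
    · right; exact ⟨trivial, hw⟩
    · left
      push Not at hw
      intro j
      have h1 := hx j
      have h2 := abs_le.1 (hw j)
      simp only [Pi.add_apply]
      dsimp only at h1
      constructor <;> linarith
  have h3 := measureReal_mono (μ := ν.prod ω) hsub
  have h4 := measureReal_union_le (μ := ν.prod ω) ((fun z : (Fin d → ℝ) × (Fin d → ℝ) => z.1 + z.2) ⁻¹'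
      (rect (fun j => a j - ε) (fun j => b j + ε))) (Set.univ ×ˢ {w | ∃ j, ε < |w j|})
  rw [measureReal_prod_prod] at h3 h4
  simp only [probReal_univ, mul_one, one_mul] at h3 h4
  exact h3.trans h4

lemma main_rect {d : ℕ} (hd : 3 ≤ d) {S S' : Fin d → Fin d → ℝ} {σ δ D : ℝ}
    (hσ : 0 < σ) (hδ : 0 < δ) (hsy : ∀ j k, S j k = S k j) (hsy' : ∀ j k, S' j k = S' k j)
    (hS : ∀ x, σ ^ 2 * ∑ l, x l ^ 2 ≤ Q S x) (hS' : ∀ x, 0 ≤ Q S' x)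
    (hD : ∀ j k, |S j k - S' j k| ≤ D) (a b : Fin d → ℝ)
    {ν₀ ν₁ : Measure (Fin d → ℝ)} (h₀ : IsG ν₀ (fun j k => (1 + δ) * S j k))
    (h₁ : IsG ν₁ (fun j k => S' j k + δ * S j k)) :
    |ν₁.real (rect a b) - ν₀.real (rect a b)|
      ≤ 9 * D * LL d ^ 2 / σ ^ 2 * Real.log ((1 + δ) / δ) := by
  by_cases hab : ∀ j, a j ≤ b j
  · exact main_fourier hd hσ hδ hsy hsy' hS hS' hD a b hab h₀ h₁
  · push Not at hab
    obtain ⟨j, hj⟩ := hab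
    have : rect a b = ∅ := by
      ext x
      simp only [Set.mem_empty_iff_false, iff_false]
      intro hx
      have := hx j
      linarith
    rw [this]
    simp only [measureReal_empty, sub_zero, abs_zero]
    have hD0 : 0 ≤ D := (abs_nonneg _).trans (hD j j)
    have : 0 ≤ Real.log ((1 + δ) / δ) := Real.log_nonneg (by rw [le_div_iff₀ hδ]; linarith)
    positivity

lemma sandwich {d : ℕ} (hd : 3 ≤ d) {S S' : Fin d → Fin d → ℝ} {σ s ε D : ℝ}
    (hσ : 0 < σ) (hs : 0 < s) (hε : 0 < ε) (hsy : ∀ j k, S j k = S k j) (hsy' : ∀ j k, S' j k = S' k j)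
    (hS : ∀ x, σ ^ 2 * ∑ l, x l ^ 2 ≤ Q S x) (hS' : ∀ x, 0 ≤ Q S' x) (hdiag : ∀ j, S j j = 1)
    (hD : ∀ j k, |S j k - S' j k| ≤ D) (a b : Fin d → ℝ)
    {ν ν' : Measure (Fin d → ℝ)} (h : IsG ν S) (h' : IsG ν' S') :
    |ν.real (rect a b) - ν'.real (rect a b)| ≤ 9 * D * LL d ^ 2 / σ ^ 2 * Real.log ((1 + s ^ 2) / s ^ 2)
      + 2 * (d * (2 * Real.exp (-(ε / s) ^ 2 / 2))) + 6 * (LL d + 1) * ε := by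
  have := h.1
  have := h'.1
  have hpos : ∀ x, 0 ≤ Q S x := fun x => le_trans (by
    have : 0 ≤ ∑ l, x l ^ 2 := Finset.sum_nonneg fun _ _ => sq_nonneg _
    positivity) (hS x)
  have hoff : ∀ j k, j ≠ k → S j k < 1 := by
    intro j k hjk
    have h1 := hS (Pi.single j 1 - Pi.single k 1)
    have h2 : Q S (Pi.single j 1 - Pi.single k 1) = 2 - 2 * S j k := by
      simp [Q, Pi.single_apply, sub_mul, mul_sub, Finset.sum_sub_distrib, hdiag, hsy k j]
      ring
    have h3 : (0:ℝ) < ∑ l, ((Pi.single j 1 - Pi.single k 1 : Fin d → ℝ) l) ^ 2 := by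
      apply Finset.sum_pos' (fun _ _ => sq_nonneg _)
      exact ⟨j, Finset.mem_univ _, by simp [Pi.single_apply, hjk]⟩
    have h4 : 0 < σ ^ 2 * ∑ l, ((Pi.single j 1 - Pi.single k 1 : Fin d → ℝ) l) ^ 2 := by positivity
    linarith
  set ω := ν.map (fun z => s • z) with hω
  have hsm := h.smul s
  have hωp : IsProbabilityMeasure ω := hsm.1
  have ht := tail h hdiag hs hε
  rw [← hω] at ht hsm
  set η := ω.real {w | ∃ j, ε < |w j|}
  have g0 : IsG ((ν.prod ω).map (fun z => z.1 + z.2)) (fun j k => (1 + s ^ 2) * S j k) := by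
    have := h.add hsm
    convert this using 1
    ext j k; ring
  have g1 := h'.add hsm
  have hM := fun a b => abs_le.1 (main_rect hd hσ (show 0 < s ^ 2 by positivity) hsy hsy' hS hS' hD a b g0 g1)
  set M := 9 * D * LL d ^ 2 / σ ^ 2 * Real.log ((1 + s ^ 2) / s ^ 2)
  have e1 : ∀ (f : Fin d → ℝ), (fun j => f j - ε - ε) = fun j => f j - 2 * ε := by intro f; ext j; ring
  have e2 : ∀ (f : Fin d → ℝ), (fun j => f j + ε + ε) = fun j => f j + 2 * ε := by intro f; ext j; ring
  have e3 : ∀ (f : Fin d → ℝ), (fun j => f j + 2 * ε - ε) = fun j => f j + ε := by intro f; ext j; ring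
  have e4 : ∀ (f : Fin d → ℝ), (fun j => f j - 2 * ε + ε) = fun j => f j - ε := by intro f; ext j; ring
  rw [abs_le]
  constructor
  · have k1 := le_conv ν' ω a b ε
    have k2 := (hM (fun j => a j - ε) (fun j => b j + ε)).2
    have k3 := conv_le ν ω (fun j => a j - ε) (fun j => b j + ε) ε
    have k4 := shell hd h hsy hpos hdiag hoff a b (show 0 < 2 * ε by linarith)
    simp only [e1, e2] at k3
    linarith
  · have k4 := shell hd h hsy hpos hdiag hoff (fun j => a j + 2 * ε) (fun j => b j - 2 * ε) (show 0 < 2 * ε by linarith)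
    have k1 := le_conv ν ω (fun j => a j + 2 * ε) (fun j => b j - 2 * ε) ε
    have k2 := (hM (fun j => a j + ε) (fun j => b j - ε)).1
    have k3 := conv_le ν' ω (fun j => a j + ε) (fun j => b j - ε) ε
    simp only [e3, e4] at k1
    simp only [add_sub_cancel_right, sub_add_cancel] at k3 k4
    linarith

/-- scalar estimate -/
lemma scalar {d : ℕ} (hd : 3 ≤ d) {r : ℝ} (hr : 0 < r) (hrL : r * Real.log d < 1 / 16) :
    9 * r * LL d ^ 2 * Real.log ((1 + (r ^ 3) ^ 2) / (r ^ 3) ^ 2)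
      + 2 * (d * (2 * Real.exp (-(r ^ 2 / r ^ 3) ^ 2 / 2))) + 6 * (LL d + 1) * r ^ 2
    ≤ 15000 * r * Real.log d * max 1 |Real.log r| := by
  have hL := log_ge_one hd
  set L := Real.log d with hLd
  have hX1 : 1 ≤ max 1 |Real.log r| := le_max_left _ _
  have hX2 : |Real.log r| ≤ max 1 |Real.log r| := le_max_right _ _
  set X := max 1 |Real.log r|
  have hr16 : r < 1 / 16 := by nlinarith
  have hrL0 : 0 < r * L := by positivity
  have hlr : -Real.log r ≤ |Real.log r| := neg_le_abs _
  have t1 : Real.log ((1 + (r ^ 3) ^ 2) / (r ^ 3) ^ 2) ≤ 7 * X := by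
    have hr6 : (r ^ 3) ^ 2 ≤ 1 := by
      have : r ^ 3 ≤ 1 := pow_le_one₀ hr.le (by linarith)
      exact pow_le_one₀ (by positivity) this
    rw [Real.log_div (by positivity) (by positivity), Real.log_pow, Real.log_pow]
    have : Real.log (1 + (r ^ 3) ^ 2) ≤ (r ^ 3) ^ 2 := by
      have := Real.log_le_sub_one_of_pos (show 0 < 1 + (r ^ 3) ^ 2 by positivity)
      linarith
    push_cast
    linarith
  have t2 : d * Real.exp (-(r ^ 2 / r ^ 3) ^ 2 / 2) ≤ r := by
    have hd0 : (0:ℝ) < d := by positivity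
    have e1 : r ^ 2 / r ^ 3 = 1 / r := by field_simp
    rw [e1]
    calc (d:ℝ) * Real.exp (-(1 / r) ^ 2 / 2) = Real.exp (L + -(1 / r) ^ 2 / 2) := by
          rw [Real.exp_add, hLd, Real.exp_log hd0]
      _ ≤ Real.exp (Real.log r) := by
          apply Real.exp_le_exp.2
          have h1 : -Real.log r ≤ 1 / r - 1 := by
            have := Real.log_le_sub_one_of_pos (show 0 < 1 / r by positivity)
            rw [one_div, Real.log_inv] at this
            rw [one_div]; exact this
          have h2 : L ≤ 1 / r := by rw [le_div_iff₀ hr]; linarith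
          have h3 : 16 ≤ 1 / r := by rw [le_div_iff₀ hr]; linarith
          nlinarith
      _ = r := Real.exp_log hr
  have t3 : LL d + 1 ≤ 16 * L := by
    have h1 := sqrt_log_ge_one hd
    have h2 : √L ^ 2 = L := Real.sq_sqrt (by linarith)
    have h3 : √L ≤ L := by rw [← hLd] at h1; nlinarith
    have : LL d = 15 * √L := rfl
    linarith
  rw [LL_sq hd]
  have hrLX : r * L ≤ r * L * X := by nlinarith
  have b1 : 9 * r * (225 * L) * Real.log ((1 + (r ^ 3) ^ 2) / (r ^ 3) ^ 2) ≤ 9 * r * (225 * L) * (7 * X) := by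
    gcongr
  have b2 : r ≤ r * L := by nlinarith
  have b3 : 6 * (LL d + 1) * r ^ 2 ≤ 96 * (r * L) := by
    calc 6 * (LL d + 1) * r ^ 2 ≤ 6 * (16 * L) * r ^ 2 := by gcongr
      _ = 96 * (r * L) * r := by ring
      _ ≤ 96 * (r * L) := by nlinarith
  nlinarith

end GC

theorem stmt11 :
    ∃ C : ℝ, 0 < C ∧
      ∀ (d : ℕ), 3 ≤ d →
      ∀ (Ω : Type) (_ : MeasurableSpace Ω) (μ : Measure Ω), IsProbabilityMeasure μ →
      ∀ (Z Z' : Ω → Fin d → ℝ), Measurable Z → Measurable Z' →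
      (∀ l : (Fin d → ℝ) →ₗ[ℝ] ℝ, ∃ v : NNReal,
        μ.map (fun ω => l (Z ω)) = gaussianReal 0 v) →
      (∀ l : (Fin d → ℝ) →ₗ[ℝ] ℝ, ∃ v : NNReal,
        μ.map (fun ω => l (Z' ω)) = gaussianReal 0 v) →
      ∀ (S S' : Fin d → Fin d → ℝ),
      (∀ j k, ∫ ω, Z ω j * Z ω k ∂μ = S j k) →
      (∀ j k, ∫ ω, Z' ω j * Z' ω k ∂μ = S' j k) →
      (∀ j, S j j = 1) →
      ∀ σs : ℝ, 0 < σs →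
      IsGLB {r : ℝ | ∃ x : Fin d → ℝ, (∑ j, (x j) ^ 2) = 1 ∧
        r = ∑ j, ∑ k, x j * S j k * x k} (σs ^ 2) →
      ∀ D : ℝ, D = ⨆ j, ⨆ k, |S j k - S' j k| →
      ∀ a b : Fin d → ℝ,
        |(μ {ω | ∀ j, a j < Z ω j ∧ Z ω j ≤ b j}).toReal
          - (μ {ω | ∀ j, a j < Z' ω j ∧ Z' ω j ≤ b j}).toReal|
          ≤ C * (D / σs ^ 2) * Real.log d * max 1 |Real.log (D / σs ^ 2)| := by
  refine ⟨15000, by norm_num, ?_⟩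
  intro d hd Ω _ μ hμ Z Z' hZ hZ' hg hg' S S' hS hS' hdiag σ hσ hglb D hD a b
  obtain ⟨h, hsy, hpos⟩ := GC.law_facts hZ hg hS
  obtain ⟨h', hsy', hpos'⟩ := GC.law_facts hZ' hg' hS'
  have p1 : (μ {ω | ∀ j, a j < Z ω j ∧ Z ω j ≤ b j}).toReal = (μ.map Z).real (GC.rect a b) := by
    rw [Measure.real, Measure.map_apply hZ (GC.rect_meas a b)]; rfl
  have p2 : (μ {ω | ∀ j, a j < Z' ω j ∧ Z' ω j ≤ b j}).toReal = (μ.map Z').real (GC.rect a b) := by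
    rw [Measure.real, Measure.map_apply hZ' (GC.rect_meas a b)]; rfl
  rw [p1, p2]
  have := h.1
  have := h'.1
  have hDle : ∀ j k, |S j k - S' j k| ≤ D := by
    intro j k
    rw [hD]
    refine le_trans ?_ (le_ciSup (f := fun j => ⨆ k, |S j k - S' j k|) (Set.finite_range _).bddAbove j)
    exact le_ciSup (f := fun k => |S j k - S' j k|) (Set.finite_range _).bddAbove k
  have hD0 : 0 ≤ D := (abs_nonneg _).trans (hDle ⟨0, by omega⟩ ⟨0, by omega⟩)
  have hQ : ∀ x, σ ^ 2 * ∑ l, x l ^ 2 ≤ GC.Q S x := by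
    intro x
    have hn : 0 ≤ ∑ l, x l ^ 2 := Finset.sum_nonneg fun _ _ => sq_nonneg _
    rcases hn.eq_or_lt with h0 | h0
    · rw [← h0, mul_zero]; exact hpos x
    · set n := ∑ l, x l ^ 2 with hnd
      have hs : √n ^ 2 = n := Real.sq_sqrt hn
      have hs0 : 0 < √n := Real.sqrt_pos.2 h0
      have : σ ^ 2 ≤ GC.Q S (fun j => x j / √n) := hglb.1 ⟨fun j => x j / √n, by
        simp only [div_pow, ← Finset.sum_div, hs]
        exact div_self h0.ne', rfl⟩
      have e : GC.Q S (fun j => x j / √n) = GC.Q S x / n := by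
        simp only [GC.Q, Finset.sum_div]
        apply Finset.sum_congr rfl; intro j _; apply Finset.sum_congr rfl; intro k _
        field_simp
        rw [hs]
        ring
      rw [e, le_div_iff₀ h0] at this
      exact this
  rcases hD0.eq_or_lt with h0 | h0
  · have : S = S' := by
      ext j k
      have := hDle j k
      rw [← h0] at this
      have := abs_nonpos_iff.1 this
      linarith
    rw [← this] at h'
    rw [h.unique h', ← h0]
    simp
  have hr : 0 < D / σ ^ 2 := by positivity
  set r := D / σ ^ 2 with hrd
  by_cases hc : r * Real.log d < 1 / 16
  · have h1 := GC.sandwich hd hσ (show 0 < r ^ 3 by positivity) (show 0 < r ^ 2 by positivity) hsy hsy' hQ hpos' hdiag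
      hDle a b h h'
    refine h1.trans (le_trans (le_of_eq ?_) (GC.scalar hd hr hc))
    rw [hrd]; ring
  · push Not at hc
    have h1 : (μ.map Z).real (GC.rect a b) ≤ 1 := measureReal_le_one
    have h2 : (μ.map Z').real (GC.rect a b) ≤ 1 := measureReal_le_one
    have h3 : 0 ≤ (μ.map Z).real (GC.rect a b) := measureReal_nonneg
    have h4 : 0 ≤ (μ.map Z').real (GC.rect a b) := measureReal_nonneg
    have h5 : |(μ.map Z).real (GC.rect a b) - (μ.map Z').real (GC.rect a b)| ≤ 1 := by
      rw [abs_le]; constructor <;> linarith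
    refine h5.trans ?_
    have hX1 : 1 ≤ max 1 |Real.log r| := le_max_left _ _
    nlinarith
end
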